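/- Trace theorem for piecewise H¹ functions: Let 𝒯_h be a shape-regular triangulation of a bounded polygonal domain Ω ⊂ ℝ² with shape regularity constant 𝒦. There is a constant C depending only on Ω and 𝒦 such that ‖u‖_{L²(∂Ω)} ≤ C ‖u‖_{H¹_h} for all u ∈ H¹_h, where ‖u‖²_{H¹_h} = ‖u‖²_{L²(Ω)} + ∫_{Ω_h} |∇u|² + Σ_{e ∈ ℰ⁰_h} |e|⁻¹ ∫_e [u]². -/

import Mathlib

open MeasureTheory Set
open scoped Classical

noncomputable section

abbrev Pt : Type := EuclideanSpace ℝ (Fin 2)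

structure Tri where
  A : Pt
  B : Pt
  C : Pt

namespace Tri

def cross (t : Tri) : ℝ :=
  (t.B 0 - t.A 0) * (t.C 1 - t.A 1) - (t.B 1 - t.A 1) * (t.C 0 - t.A 0)

/-- Non-degeneracy (the three vertices are not collinear). -/
def Nondeg (t : Tri) : Prop := t.cross ≠ 0

def area (t : Tri) : ℝ := |t.cross| / 2

def la (t : Tri) : ℝ := dist t.B t.C
def lb (t : Tri) : ℝ := dist t.A t.C
def lc (t : Tri) : ℝ := dist t.A t.B

/-- Inradius of a triangle: `r = 2·Area/(a+b+c)`. -/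
def inradius (t : Tri) : ℝ := 2 * t.area / (t.la + t.lb + t.lc)

/-- Circumradius of a triangle: `R = abc/(4·Area)`. -/
def circumradius (t : Tri) : ℝ := t.la * t.lb * t.lc / (4 * t.area)

/-- Shape regularity constant `R/r` of a triangle. -/
def shapeReg (t : Tri) : ℝ := t.circumradius / t.inradius

def closedHull (t : Tri) : Set Pt := convexHull ℝ {t.A, t.B, t.C}

def openHull (t : Tri) : Set Pt := interior t.closedHull

def edgeList (t : Tri) : List (Pt × Pt) := [(t.A, t.B), (t.B, t.C), (t.C, t.A)]

end Tri

/-- Two (oriented) edges coincide as unoriented segments. -/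
def SameEdge (e e' : Pt × Pt) : Prop := e' = e ∨ e' = (e.2, e.1)

/-- Arclength integral of `f` over the straight segment from `p` to `q`. -/
def segInt (p q : Pt) (f : Pt → ℝ) : ℝ :=
  dist p q * ∫ s in (0:ℝ)..1, f (p + s • (q - p))

/-- A bounded polygonal domain in the plane. -/
def IsPolygon (Ω : Set Pt) : Prop :=
  Ω.Nonempty ∧ Bornology.IsBounded Ω ∧
    ∃ S : Finset Tri, (∀ t ∈ S, t.Nondeg) ∧ Ω = interior (⋃ t ∈ S, t.closedHull)

/-- A (conforming) triangulation of the polygonal domain `Ω`. -/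
structure Triangulation (Ω : Set Pt) where
  tris : Finset Tri
  nondeg : ∀ t ∈ tris, t.Nondeg
  cover : Ω = interior (⋃ t ∈ tris, t.closedHull)
  disj : ∀ t ∈ tris, ∀ t' ∈ tris, t ≠ t' → t.openHull ∩ t'.openHull = ∅
  conforming : ∀ t ∈ tris, ∀ e ∈ t.edgeList,
      segment ℝ e.1 e.2 ⊆ frontier Ω ∨
      ∃ t' ∈ tris, t' ≠ t ∧ ∃ e' ∈ t'.edgeList, SameEdge e e'

namespace Triangulation

variable {Ω : Set Pt}

/-- All triangles have shape regularity constant at most `K`. -/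
def ShapeRegular (T : Triangulation Ω) (K : ℝ) : Prop :=
  ∀ t ∈ T.tris, t.shapeReg ≤ K

/-- `‖u‖²_{L²(Ω)}` of a piecewise function. -/
def sqL2 (T : Triangulation Ω) (u : Tri → Pt → ℝ) : ℝ :=
  ∑ t ∈ T.tris, ∫ x in t.openHull, (u t x) ^ 2

/-- `∫_{Ω_h} |∇u|²` of a piecewise function. -/
def gradSq (T : Triangulation Ω) (u : Tri → Pt → ℝ) : ℝ :=
  ∑ t ∈ T.tris, ∫ x in t.openHull, ‖fderiv ℝ (u t) x‖ ^ 2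

/-- Contribution `Σ_{e shared by t₁,t₂} |e|⁻¹ ∫_e [u]²` of the common edges of `t₁, t₂`. -/
def edgeJump (u : Tri → Pt → ℝ) (t₁ t₂ : Tri) : ℝ :=
  ((t₁.edgeList.map fun e =>
    if ∃ e' ∈ t₂.edgeList, SameEdge e e' then
      (dist e.1 e.2)⁻¹ * segInt e.1 e.2 (fun x => (u t₁ x - u t₂ x) ^ 2)
    else 0)).sum

/-- `Σ_{e ∈ ℰ⁰_h} |e|⁻¹ ∫_e [u]²` (each interior edge counted once, whence the `1/2`). -/
def jumpSq (T : Triangulation Ω) (u : Tri → Pt → ℝ) : ℝ :=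
  (1/2) * ∑ t₁ ∈ T.tris, ∑ t₂ ∈ T.tris, if t₁ ≠ t₂ then edgeJump u t₁ t₂ else 0

/-- The squared `H¹_h` norm. -/
def normSq (T : Triangulation Ω) (u : Tri → Pt → ℝ) : ℝ :=
  T.sqL2 u + T.gradSq u + T.jumpSq u

/-- `∫_{∂Ω} u²` via the traces from the triangles having a boundary edge. -/
def bdrySq (T : Triangulation Ω) (u : Tri → Pt → ℝ) : ℝ :=
  ∑ t ∈ T.tris, ((t.edgeList.map fun e =>
    if segment ℝ e.1 e.2 ⊆ frontier Ω then segInt e.1 e.2 (fun x => (u t x) ^ 2) else 0)).sum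

/-- `u` is a piecewise `H¹` function subordinate to the triangulation. -/
def PwH1 (T : Triangulation Ω) (u : Tri → Pt → ℝ) : Prop :=
  ∀ t ∈ T.tris, ContinuousOn (u t) t.closedHull ∧ DifferentiableOn ℝ (u t) t.openHull ∧
    IntegrableOn (fun x => (u t x) ^ 2) t.openHull ∧
    IntegrableOn (fun x => ‖fderiv ℝ (u t) x‖ ^ 2) t.openHull

/-- `v : ℝ² → ℝ` is the extension by zero of the piecewise function `u`. -/
def Glues (T : Triangulation Ω) (u : Tri → Pt → ℝ) (v : Pt → ℝ) : Prop :=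
  (∀ t ∈ T.tris, ∀ x ∈ t.openHull, v x = u t x) ∧ ∀ x, x ∉ Ω → v x = 0

end Triangulation

/-! ### Plane geometry -/

def cr (v w : Pt) : ℝ := v 0 * w 1 - v 1 * w 0

namespace Tri

def P (t : Tri) (i : Fin 3) : Pt := ![t.A, t.B, t.C] i
def Q (t : Tri) (i : Fin 3) : Pt := ![t.B, t.C, t.A] i
def R (t : Tri) (i : Fin 3) : Pt := ![t.C, t.A, t.B] i

def bary (t : Tri) (i : Fin 3) (y : Pt) : ℝ := cr (t.Q i - t.P i) (y - t.P i) / t.cross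

def slope (t : Tri) (i : Fin 3) (d : Pt) : ℝ := cr (t.Q i - t.P i) d / t.cross

/-- `y` is in the relative interior of the edge `i`. -/
def OE (t : Tri) (i : Fin 3) (y : Pt) : Prop := t.bary i y = 0 ∧ ∀ j, j ≠ i → 0 < t.bary j y

theorem bary_sum (t : Tri) (h : t.Nondeg) (y : Pt) :
    t.bary 0 y + t.bary 1 y + t.bary 2 y = 1 := by
  have h' : t.cross ≠ 0 := h
  simp only [bary, cr, P, Q]
  rw [← add_div, ← add_div, div_eq_one_iff_eq h']
  simp [cross]; ring

theorem bary_move (t : Tri) (i : Fin 3) (y d : Pt) (s : ℝ) :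
    t.bary i (y + s • d) = t.bary i y + s * t.slope i d := by
  simp only [bary, slope, cr]
  simp; ring

theorem bary_eq_of (t : Tri) (i : Fin 3) (y z : Pt) :
    t.bary i z = t.bary i y + t.slope i (z - y) := by
  simp only [bary, slope, cr]
  simp; ring

theorem continuous_bary (t : Tri) (i : Fin 3) : Continuous (t.bary i) := by
  unfold bary cr
  fun_prop

theorem bary_recon (t : Tri) (h : t.Nondeg) (y : Pt) :
    y = t.bary 1 y • t.A + t.bary 2 y • t.B + t.bary 0 y • t.C := by
  have h' : t.cross ≠ 0 := h
  ext k
  fin_cases k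
  · simp [bary, cr, P, Q]
    field_simp
    simp [cross]; ring
  · simp [bary, cr, P, Q]
    field_simp
    simp [cross]; ring

theorem mem_hull_iff (p q r y : Pt) : y ∈ convexHull ℝ {p, q, r} ↔
    ∃ a b c : ℝ, 0 ≤ a ∧ 0 ≤ b ∧ 0 ≤ c ∧ a + b + c = 1 ∧ y = a • p + b • q + c • r := by
  constructor
  · intro hy
    rw [convexHull_insert (by simp), convexHull_pair] at hy
    simp only [mem_convexJoin, mem_singleton_iff, exists_eq_left] at hy
    obtain ⟨z, ⟨a, b, ha, hb, hab, rfl⟩, ⟨a', b', ha', hb', hab', rfl⟩⟩ := hy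
    refine ⟨a', b' * a, b' * b, ha', by positivity, by positivity, ?_, ?_⟩
    · rw [add_assoc, ← mul_add, hab, mul_one, hab']
    · rw [smul_add, smul_smul, smul_smul, add_assoc]
  · rintro ⟨a, b, c, ha, hb, hc, hs, rfl⟩
    have hcv := convex_convexHull ℝ ({p, q, r} : Set Pt)
    have hp : p ∈ convexHull ℝ ({p, q, r} : Set Pt) := subset_convexHull _ _ (by simp)
    have hq : q ∈ convexHull ℝ ({p, q, r} : Set Pt) := subset_convexHull _ _ (by simp)
    have hr : r ∈ convexHull ℝ ({p, q, r} : Set Pt) := subset_convexHull _ _ (by simp)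
    have := hcv.sum_mem (t := Finset.univ) (w := ![a, b, c]) (z := ![p, q, r])
      (by intro i _; fin_cases i <;> simpa) (by simp [Fin.sum_univ_three, hs])
      (by intro i _; fin_cases i <;> simpa)
    simpa [Fin.sum_univ_three] using this

theorem mem_closedHull (t : Tri) (h : t.Nondeg) (y : Pt) :
    y ∈ t.closedHull ↔ ∀ i, 0 ≤ t.bary i y := by
  have h' : t.cross ≠ 0 := h
  unfold closedHull
  rw [mem_hull_iff]
  constructor
  · rintro ⟨a, b, c, ha, hb, hc, hs, rfl⟩ i
    have hc' : c = 1 - a - b := by linarith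
    fin_cases i
    · have : t.bary 0 (a • t.A + b • t.B + c • t.C) = c := by
        simp [bary, cr, P, Q]; field_simp; simp [cross, hc']; ring
      simpa [this]
    · have : t.bary 1 (a • t.A + b • t.B + c • t.C) = a := by
        simp [bary, cr, P, Q]; field_simp; simp [cross, hc']; ring
      simpa [this]
    · have : t.bary 2 (a • t.A + b • t.B + c • t.C) = b := by
        simp [bary, cr, P, Q]; field_simp; simp [cross, hc']; ring
      simpa [this]
  · intro hy
    refine ⟨_, _, _, hy 1, hy 2, hy 0, ?_, t.bary_recon h y⟩
    have := t.bary_sum h y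
    linarith

theorem exists_slope (t : Tri) (h : t.Nondeg) (i : Fin 3) : ∃ d, t.slope i d < 0 := by
  have h' : t.cross ≠ 0 := h
  refine ⟨t.P i - t.R i, ?_⟩
  have : t.slope i (t.P i - t.R i) = -1 := by
    unfold slope
    rw [div_eq_iff h']
    fin_cases i <;> simp [cr, P, Q, R, cross] <;> ring
  rw [this]; norm_num

theorem mem_openHull (t : Tri) (h : t.Nondeg) (y : Pt) :
    y ∈ t.openHull ↔ ∀ i, 0 < t.bary i y := by
  constructor
  · intro hy i
    have hc := (t.mem_closedHull h y).1 (interior_subset hy)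
    refine lt_of_le_of_ne (hc i) fun h0 => ?_
    obtain ⟨d, hd⟩ := t.exists_slope h i
    have hnh : ∀ᶠ s in nhds (0:ℝ), y + s • d ∈ t.closedHull := by
      have hcont : Continuous fun s : ℝ => y + s • d := by fun_prop
      have : t.closedHull ∈ nhds (y + (0:ℝ) • d) := by
        simpa using mem_interior_iff_mem_nhds.1 hy
      exact hcont.continuousAt.eventually this
    obtain ⟨s, hs, hs0⟩ := ((hnh.filter_mono nhdsWithin_le_nhds).and
      (self_mem_nhdsWithin (a := (0:ℝ)) (s := Ioi 0))).exists
    have := (t.mem_closedHull h _).1 hs i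
    rw [bary_move, ← h0] at this
    have hs0' : (0:ℝ) < s := hs0
    nlinarith
  · intro hy
    have hopen : IsOpen {z | ∀ i, 0 < t.bary i z} := by
      simp only [ofPred_forall]
      exact isOpen_iInter_of_finite fun i => isOpen_lt continuous_const (t.continuous_bary i)
    refine interior_maximal ?_ hopen hy
    intro z hz
    exact (t.mem_closedHull h z).2 fun i => (hz i).le

theorem isOpen_openHull (t : Tri) : IsOpen t.openHull := isOpen_interior

theorem isCompact_closedHull (t : Tri) : IsCompact t.closedHull := by
  unfold closedHull
  exact Set.Finite.isCompact_convexHull ℝ (Set.toFinite _)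

theorem isClosed_closedHull (t : Tri) : IsClosed t.closedHull := t.isCompact_closedHull.isClosed

theorem OE.mem_closed {t : Tri} (h : t.Nondeg) {i : Fin 3} {y : Pt} (hy : t.OE i y) :
    y ∈ t.closedHull := by
  rw [t.mem_closedHull h]
  intro j
  by_cases hj : j = i
  · rw [hj, hy.1]
  · exact (hy.2 j hj).le

theorem OE.not_mem_open {t : Tri} (h : t.Nondeg) {i : Fin 3} {y : Pt} (hy : t.OE i y) :
    y ∉ t.openHull := by
  rw [t.mem_openHull h]
  intro H
  exact (H i).ne' hy.1

/-- moving inside from an edge -/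
theorem OE.move {t : Tri} (h : t.Nondeg) {i : Fin 3} {y : Pt} (hy : t.OE i y) {d : Pt}
    (hd : 0 < t.slope i d) : ∀ᶠ s in nhdsWithin (0:ℝ) (Ioi 0), y + s • d ∈ t.openHull := by
  have h1 : ∀ j, j ≠ i → ∀ᶠ s in nhdsWithin (0:ℝ) (Ioi 0), 0 < t.bary j (y + s • d) := by
    intro j hj
    have hcont : Continuous fun s : ℝ => t.bary j (y + s • d) :=
      (t.continuous_bary j).comp (by fun_prop)
    have : ∀ᶠ s in nhds (0:ℝ), 0 < t.bary j (y + s • d) :=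
      hcont.continuousAt.eventually (lt_mem_nhds (by simpa using hy.2 j hj))
    exact this.filter_mono nhdsWithin_le_nhds
  have h2 : ∀ᶠ s in nhdsWithin (0:ℝ) (Ioi 0), ∀ j, 0 < t.bary j (y + s • d) := by
    rw [Filter.eventually_all]
    intro j
    by_cases hj : j = i
    · filter_upwards [self_mem_nhdsWithin] with s hs
      rw [hj, bary_move, hy.1, zero_add]
      exact mul_pos hs hd
    · exact h1 j hj
  filter_upwards [h2] with s hs
  exact (t.mem_openHull h _).2 hs

theorem openSeg_OE (t : Tri) (h : t.Nondeg) (i : Fin 3) {σ : ℝ} (h0 : 0 < σ) (h1 : σ < 1) :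
    t.OE i (t.P i + σ • (t.Q i - t.P i)) := by
  have h' : t.cross ≠ 0 := h
  have key : ∀ j, t.bary j (t.P i + σ • (t.Q i - t.P i)) =
      if j = i then 0 else if j = i + 1 then 1 - σ else σ := by
    intro j
    fin_cases i <;> fin_cases j <;> simp [bary, cr, P, Q] <;> field_simp <;> simp [cross] <;> ring
  refine ⟨by simp [key], fun j hj => ?_⟩
  rw [key, if_neg hj]
  split_ifs <;> linarith

theorem OE_openSeg (t : Tri) (h : t.Nondeg) (i : Fin 3) {y : Pt} (hy : t.OE i y) :
    ∃ σ : ℝ, 0 < σ ∧ σ < 1 ∧ y = t.P i + σ • (t.Q i - t.P i) := by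
  have hr := t.bary_recon h y
  have hs := t.bary_sum h y
  refine ⟨t.bary (i + 2) y, hy.2 _ (by fin_cases i <;> decide), ?_, ?_⟩
  · have h0 := hy.1
    have := hy.2 (i + 1) (by fin_cases i <;> decide)
    fin_cases i <;> simp at * <;> linarith
  · have h0 := hy.1
    have hs' : t.bary (i+1) y = 1 - t.bary (i+2) y := by
      fin_cases i <;> simp at * <;> linarith
    conv_lhs => rw [hr]
    fin_cases i
    · simp [P, Q] at *
      rw [h0, hs']; module
    · simp [P, Q] at *
      rw [h0, hs']; module
    · simp [P, Q] at *
      rw [h0, hs']; module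

/-- A boundary point that is not a vertex lies in a relatively open edge. -/
theorem exists_OE (t : Tri) (h : t.Nondeg) {y : Pt} (hc : y ∈ t.closedHull)
    (ho : y ∉ t.openHull) (hv : ∀ i, y ≠ t.P i) : ∃ i, t.OE i y := by
  rw [t.mem_closedHull h] at hc
  rw [t.mem_openHull h] at ho
  push Not at ho
  obtain ⟨i, hi⟩ := ho
  have hi0 : t.bary i y = 0 := le_antisymm hi (hc i)
  refine ⟨i, hi0, fun j hj => lt_of_le_of_ne (hc j) fun hj0 => ?_⟩
  have hr := t.bary_recon h y
  have hs := t.bary_sum h y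
  have hA := hv 0
  have hB := hv 1
  have hC := hv 2
  fin_cases i <;> fin_cases j <;> simp [P] at * <;> simp [← hj0, hi0] at hs hr <;>
    simp [hs] at hr <;> contradiction

/-- Proportionality of barycentric coordinates for collinear edges. -/
theorem bary_prop {t t' : Tri} (h : t.Nondeg) (h' : t'.Nondeg) {i i' : Fin 3} {y : Pt}
    (hy : t.OE i y) (hy' : t'.OE i' y) (hp : cr (t.Q i - t.P i) (t'.Q i' - t'.P i') = 0) :
    ∃ κ : ℝ, κ ≠ 0 ∧ ∀ d, t'.slope i' d = κ * t.slope i d := by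
  have c0 : t.cross ≠ 0 := h
  have c0' : t'.cross ≠ 0 := h'
  obtain ⟨d0, hd0⟩ := t'.exists_slope h' i'
  obtain ⟨d1, hd1⟩ := t.exists_slope h i
  set n := t.Q i - t.P i
  set n' := t'.Q i' - t'.P i'
  have hn : cr n d1 ≠ 0 := by
    intro h0; unfold slope at hd1; rw [h0] at hd1; simp at hd1
  have hn' : cr n' d0 ≠ 0 := by
    intro h0; unfold slope at hd0; rw [h0] at hd0; simp at hd0
  have key : ∀ d, cr n' d * cr n d1 = cr n d * cr n' d1 := by
    intro d
    have : cr n' d * cr n d1 - cr n d * cr n' d1 = cr n n' * cr d1 d := by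
      simp only [cr]; ring
    rw [hp] at this; linarith
  have hk : cr n' d1 ≠ 0 := by
    intro h0
    have := key d0
    rw [h0, mul_zero] at this
    exact mul_ne_zero hn' hn this
  refine ⟨cr n' d1 / cr n d1 * t.cross / t'.cross, by positivity, fun d => ?_⟩
  unfold slope
  change cr n' d / _ = _ * (cr n d / _)
  field_simp
  linarith [key d]

theorem inter_of_pos {t t' : Tri} (h : t.Nondeg) (h' : t'.Nondeg) {i i' : Fin 3} {y : Pt}
    (hy : t.OE i y) (hy' : t'.OE i' y) {κ : ℝ} (hκ : 0 < κ)
    (hk : ∀ d, t'.slope i' d = κ * t.slope i d) : (t.openHull ∩ t'.openHull).Nonempty := by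
  obtain ⟨d, hd⟩ := t.exists_slope h i
  have hd' : 0 < t.slope i (-d) := by
    have : t.slope i (-d) = - t.slope i d := by simp [slope, cr]; ring
    linarith
  have hd'' : 0 < t'.slope i' (-d) := by rw [hk]; positivity
  obtain ⟨s, h1, h2⟩ := ((hy.move h hd').and (hy'.move h' hd'')).exists
  exact ⟨_, h1, h2⟩

theorem interior_of_neg {t t' : Tri} (h : t.Nondeg) (h' : t'.Nondeg) {i i' : Fin 3} {y : Pt}
    (hy : t.OE i y) (hy' : t'.OE i' y) {κ : ℝ} (hκ : κ < 0)
    (hk : ∀ d, t'.slope i' d = κ * t.slope i d) :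
    y ∈ interior (t.closedHull ∪ t'.closedHull) := by
  rw [mem_interior_iff_mem_nhds]
  have aux : ∀ (t : Tri) (i : Fin 3), t.OE i y → ∀ᶠ z in nhds y, ∀ j, j ≠ i → 0 < t.bary j z := by
    intro t i hy
    rw [Filter.eventually_all]
    intro j
    by_cases hj : j = i
    · simp [hj]
    · filter_upwards [(t.continuous_bary j).continuousAt.eventually (lt_mem_nhds (hy.2 j hj))]
        with z hz _ using hz
  filter_upwards [aux t i hy, aux t' i' hy'] with z hz hz'
  by_cases hs : 0 ≤ t.slope i (z - y)
  · left
    rw [t.mem_closedHull h]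
    intro j
    by_cases hj : j = i
    · rw [hj, t.bary_eq_of i y z, hy.1, zero_add]; exact hs
    · exact (hz j hj).le
  · right
    rw [t'.mem_closedHull h']
    intro j
    by_cases hj : j = i'
    · rw [hj, t'.bary_eq_of i' y z, hy'.1, zero_add, hk]
      push Not at hs
      nlinarith
    · exact (hz' j hj).le

theorem mem_edgeList (t : Tri) (e : Pt × Pt) : e ∈ t.edgeList ↔ ∃ i, e = (t.P i, t.Q i) := by
  simp only [edgeList, List.mem_cons, List.not_mem_nil, or_false]
  constructor
  · rintro (h | h | h)
    · exact ⟨0, h⟩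
    · exact ⟨1, h⟩
    · exact ⟨2, h⟩
  · rintro ⟨i, h⟩
    fin_cases i
    · exact Or.inl h
    · exact Or.inr (Or.inl h)
    · exact Or.inr (Or.inr h)

theorem edge_sum {M : Type*} [AddCommMonoid M] (t : Tri) (f : Pt × Pt → M) :
    (t.edgeList.map f).sum = ∑ i : Fin 3, f (t.P i, t.Q i) := by
  simp [edgeList, Fin.sum_univ_three, P, Q, add_assoc]

/-- shared edges -/
theorem OE_of_same {t t' : Tri} (h : t.Nondeg) (h' : t'.Nondeg) {i i' : Fin 3}
    (he : SameEdge (t.P i, t.Q i) (t'.P i', t'.Q i')) {y : Pt} (hy : t.OE i y) :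
    t'.OE i' y ∧ cr (t.Q i - t.P i) (t'.Q i' - t'.P i') = 0 := by
  obtain ⟨σ, h0, h1, rfl⟩ := t.OE_openSeg h i hy
  rcases he with he | he
  · simp only [Prod.mk.injEq] at he
    rw [← he.1, ← he.2]
    exact ⟨t'.openSeg_OE h' i' h0 h1, by simp [cr]; ring⟩
  · simp only [Prod.mk.injEq] at he
    rw [← he.1, ← he.2]
    refine ⟨?_, by simp [cr]; ring⟩
    have := t'.openSeg_OE h' i' (σ := 1 - σ) (by linarith) (by linarith)
    convert this using 1
    module

theorem cross_ne (t : Tri) (h : t.Nondeg) (i : Fin 3) : t.Q i ≠ t.P i := by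
  intro h0
  obtain ⟨d, hd⟩ := t.exists_slope h i
  simp [slope, h0, cr] at hd

end Tri
/-! ### Geometry of triangulations -/

namespace Tri

/-- Base point, base vector and transversal vector of the two half-edge charts. -/
def cX (t : Tri) (i : Fin 3) (b : Bool) : Pt := if b then t.Q i else t.P i
def cT (t : Tri) (i : Fin 3) (b : Bool) : Pt :=
  (1/2 : ℝ) • (if b then t.P i - t.Q i else t.Q i - t.P i)
def cD (t : Tri) (i : Fin 3) (b : Bool) : Pt := (1/2 : ℝ) • (t.R i - t.cX i b)

theorem chart_OE (t : Tri) (h : t.Nondeg) (i : Fin 3) (b : Bool) {r : ℝ} (h0 : 0 < r)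
    (h1 : r < 1) : t.OE i (t.cX i b + r • t.cT i b) := by
  cases b
  · have := t.openSeg_OE h i (σ := r / 2) (by linarith) (by linarith)
    convert this using 1
    simp [cX, cT]; module
  · have := t.openSeg_OE h i (σ := 1 - r / 2) (by linarith) (by linarith)
    convert this using 1
    simp [cX, cT]; module

theorem chart_open (t : Tri) (h : t.Nondeg) (i : Fin 3) (b : Bool) {r s : ℝ} (h0 : 0 < r)
    (h1 : r < 1) (k0 : 0 < s) (k1 : s < 1) :
    t.cX i b + r • t.cT i b + s • t.cD i b ∈ t.openHull := by
  have h' : t.cross ≠ 0 := h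
  rw [t.mem_openHull h]
  have key : ∀ j, t.bary j (t.cX i b + r • t.cT i b + s • t.cD i b) =
      if j = i then s / 2 else if (j = i + 1) = (b = false) then 1 - r / 2 - s / 2 else r / 2 := by
    intro j
    cases b <;> fin_cases i <;> fin_cases j <;> simp [bary, cr, P, Q, R, cX, cT, cD] <;>
      field_simp <;> simp [cross] <;> ring
  intro j
  rw [key]
  split_ifs <;> linarith

theorem chart_slope (t : Tri) (h : t.Nondeg) (i : Fin 3) (b : Bool) :
    t.slope i (t.cD i b) = 1 / 2 := by
  have h' : t.cross ≠ 0 := h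
  unfold slope
  rw [div_eq_iff h']
  cases b <;> fin_cases i <;> simp [cr, P, Q, R, cX, cD, cross] <;> ring

theorem chart_cr (t : Tri) (i : Fin 3) (b : Bool) :
    |cr (t.cT i b) (t.cD i b)| = |t.cross| / 4 := by
  have : cr (t.cT i b) (t.cD i b) = (if b then -1 else 1) * (t.cross / 4) := by
    cases b <;> fin_cases i <;> simp [cr, P, Q, R, cX, cT, cD, cross] <;> ring
  rw [this]
  cases b <;> simp [abs_div]

theorem P_mem (t : Tri) (i : Fin 3) : t.P i ∈ t.closedHull :=
  subset_convexHull _ _ (by fin_cases i <;> simp [P])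
theorem Q_mem (t : Tri) (i : Fin 3) : t.Q i ∈ t.closedHull :=
  subset_convexHull _ _ (by fin_cases i <;> simp [Q])
theorem R_mem (t : Tri) (i : Fin 3) : t.R i ∈ t.closedHull :=
  subset_convexHull _ _ (by fin_cases i <;> simp [R])

theorem openHull_nonempty (t : Tri) (h : t.Nondeg) : t.openHull.Nonempty :=
  ⟨_, t.chart_open h 0 true (r := 1/2) (s := 1/2) (by norm_num) (by norm_num) (by norm_num)
    (by norm_num)⟩

theorem closedHull_subset_closure (t : Tri) (h : t.Nondeg) :
    t.closedHull ⊆ closure t.openHull := by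
  have := (convex_convexHull ℝ ({t.A, t.B, t.C} : Set Pt)).closure_interior_eq_closure_of_nonempty_interior
    (t.openHull_nonempty h)
  intro x hx
  unfold openHull closedHull
  rw [this]
  exact subset_closure hx

end Tri

namespace Triangulation

variable {Ω : Set Pt}

theorem isOpen_dom (T : Triangulation Ω) : IsOpen Ω := by
  rw [T.cover]; exact isOpen_interior

theorem open_subset (T : Triangulation Ω) {t : Tri} (ht : t ∈ T.tris) : t.openHull ⊆ Ω := by
  intro x hx
  rw [T.cover]
  exact interior_mono (subset_biUnion_of_mem (u := fun t : Tri => t.closedHull) ht) hx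

theorem closed_subset (T : Triangulation Ω) {t : Tri} (ht : t ∈ T.tris) :
    t.closedHull ⊆ closure Ω :=
  (t.closedHull_subset_closure (T.nondeg t ht)).trans (closure_mono (T.open_subset ht))

theorem closure_subset' (T : Triangulation Ω) : closure Ω ⊆ ⋃ t ∈ T.tris, t.closedHull := by
  refine closure_minimal ?_ ?_
  · intro x hx
    rw [T.cover] at hx
    exact interior_subset hx
  · exact T.tris.finite_toSet.isClosed_biUnion fun t _ => t.isClosed_closedHull

theorem interior_closure (T : Triangulation Ω) {x : Pt} {s : Set Pt} (hs : s ⊆ closure Ω)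
    (hx : x ∈ interior s) : x ∈ Ω := by
  rw [T.cover]
  exact interior_mono (hs.trans T.closure_subset') hx

theorem not_frontier (T : Triangulation Ω) {x : Pt} (hx : x ∈ Ω) : x ∉ frontier Ω := by
  rw [T.isOpen_dom.frontier_eq]
  exact fun h => h.2 hx

def bd (Ω : Set Pt) (t : Tri) (i : Fin 3) : Prop := segment ℝ (t.P i) (t.Q i) ⊆ frontier Ω

theorem exists_nb (T : Triangulation Ω) {t : Tri} (ht : t ∈ T.tris) {i : Fin 3} (hb : ¬ bd Ω t i) :
    ∃ t' ∈ T.tris, t' ≠ t ∧ ∃ i', SameEdge (t.P i, t.Q i) (t'.P i', t'.Q i') := by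
  rcases T.conforming t ht (t.P i, t.Q i) ((t.mem_edgeList _).2 ⟨i, rfl⟩) with h | h
  · exact absurd h hb
  · obtain ⟨t', ht', hne, e', he', hs⟩ := h
    obtain ⟨i', rfl⟩ := (t'.mem_edgeList _).1 he'
    exact ⟨t', ht', hne, i', hs⟩

theorem OE_seg {t : Tri} (h : t.Nondeg) {i : Fin 3} {x : Pt} (hx : t.OE i x) :
    x ∈ segment ℝ (t.P i) (t.Q i) := by
  obtain ⟨σ, h0, h1, rfl⟩ := t.OE_openSeg h i hx
  rw [segment_eq_image']
  exact ⟨σ, ⟨h0.le, h1.le⟩, rfl⟩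

theorem shared_neg (T : Triangulation Ω) {t t' : Tri} (ht : t ∈ T.tris) (ht' : t' ∈ T.tris)
    (hne : t' ≠ t) {i i' : Fin 3} (hs : SameEdge (t.P i, t.Q i) (t'.P i', t'.Q i')) {y : Pt}
    (hy : t.OE i y) : t'.OE i' y ∧ ∃ κ : ℝ, κ < 0 ∧ ∀ d, t'.slope i' d = κ * t.slope i d := by
  have h := T.nondeg t ht
  have h' := T.nondeg t' ht'
  obtain ⟨hy', hp⟩ := Tri.OE_of_same h h' hs hy
  obtain ⟨κ, h0, hk⟩ := Tri.bary_prop h h' hy hy' hp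
  refine ⟨hy', κ, lt_of_not_ge fun hκ => ?_, hk⟩
  have := Tri.inter_of_pos h h' hy hy' (lt_of_le_of_ne hκ h0.symm) hk
  rw [T.disj t ht t' ht' hne.symm] at this
  exact not_nonempty_empty this

theorem mem_of_shared (T : Triangulation Ω) {t : Tri} (ht : t ∈ T.tris) {i : Fin 3}
    (hb : ¬ bd Ω t i) {y : Pt} (hy : t.OE i y) : y ∈ Ω := by
  obtain ⟨t', ht', hne, i', hs⟩ := T.exists_nb ht hb
  obtain ⟨hy', κ, hκ, hk⟩ := T.shared_neg ht ht' hne hs hy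
  exact T.interior_closure (union_subset (T.closed_subset ht) (T.closed_subset ht'))
    (Tri.interior_of_neg (T.nondeg t ht) (T.nondeg t' ht') hy hy' hκ hk)

/-- Every generic boundary point is in the base of some chart of `T`. -/
theorem exists_chart (T : Triangulation Ω) {x : Pt} (hx : x ∈ frontier Ω)
    (hv : ∀ t ∈ T.tris, ∀ i, x ≠ t.P i)
    (hm : ∀ t ∈ T.tris, ∀ i, x ≠ t.P i + (1/2 : ℝ) • (t.Q i - t.P i)) :
    ∃ t ∈ T.tris, ∃ i, bd Ω t i ∧ ∃ b, ∃ r : ℝ, 0 < r ∧ r < 1 ∧ x = t.cX i b + r • t.cT i b := by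
  have hc := T.closure_subset' (frontier_subset_closure hx)
  simp only [mem_iUnion] at hc
  obtain ⟨t, ht, hxt⟩ := hc
  have h := T.nondeg t ht
  have ho : x ∉ t.openHull := fun ho => T.not_frontier (T.open_subset ht ho) hx
  obtain ⟨i, hi⟩ := t.exists_OE h hxt ho (hv t ht)
  have hb : bd Ω t i := by
    by_contra hb
    exact T.not_frontier (T.mem_of_shared ht hb hi) hx
  obtain ⟨σ, h0, h1, rfl⟩ := t.OE_openSeg h i hi
  refine ⟨t, ht, i, hb, ?_⟩
  rcases lt_trichotomy σ (1/2) with hlt | heq | hgt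
  · refine ⟨false, 2 * σ, by linarith, by linarith, ?_⟩
    simp [Tri.cX, Tri.cT]; module
  · subst heq
    exact absurd rfl (hm t ht i)
  · refine ⟨true, 2 * (1 - σ), by linarith, by linarith, ?_⟩
    simp [Tri.cX, Tri.cT]; module

theorem direction (T T₀ : Triangulation Ω) {t t₀ : Tri} (ht : t ∈ T.tris) (ht₀ : t₀ ∈ T₀.tris)
    {i i₀ : Fin 3} (hb : bd Ω t i) {x : Pt} (hx : t.OE i x)
    (hx₀ : t₀.OE i₀ x) {d : Pt} (hd : 0 < t₀.slope i₀ d) : 0 < t.slope i d := by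
  have h := T.nondeg t ht
  have h₀ := T₀.nondeg t₀ ht₀
  have hxf : x ∈ frontier Ω := hb (OE_seg h hx)
  have hp : cr (t₀.Q i₀ - t₀.P i₀) (t.Q i - t.P i) = 0 := by
    by_contra hp
    have c0 : t₀.cross ≠ 0 := h₀
    have hsl : t₀.slope i₀ (t.Q i - t.P i) ≠ 0 := div_ne_zero hp c0
    have main : ∀ c : ℝ, 0 < t₀.slope i₀ (c • (t.Q i - t.P i)) → False := by
      intro c hc
      obtain ⟨σ, h0, h1, hσ⟩ := t.OE_openSeg h i hx
      have e1 := hx₀.move h₀ hc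
      have hcont : Continuous fun s : ℝ => σ + s * c := by fun_prop
      have e2 : ∀ᶠ s in nhds (0:ℝ), σ + s * c ∈ Ioo (0:ℝ) 1 :=
        hcont.continuousAt.eventually (isOpen_Ioo.mem_nhds (by simp [h0, h1]))
      obtain ⟨s, hs1, hs2⟩ := (e1.and (e2.filter_mono nhdsWithin_le_nhds)).exists
      have e3 := hb (OE_seg h (t.openSeg_OE h i hs2.1 hs2.2))
      refine T.not_frontier (T₀.open_subset ht₀ hs1) ?_
      convert e3 using 1
      rw [hσ]; module
    rcases lt_or_gt_of_ne hsl with hlt | hgt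
    · refine main (-1) ?_
      have : t₀.slope i₀ ((-1 : ℝ) • (t.Q i - t.P i)) = - t₀.slope i₀ (t.Q i - t.P i) := by
        simp [Tri.slope, cr]; ring
      rw [this]; linarith
    · exact main 1 (by simpa using hgt)
  obtain ⟨κ, h0, hk⟩ := Tri.bary_prop h₀ h hx₀ hx hp
  rcases lt_or_gt_of_ne h0 with hlt | hgt
  · exfalso
    exact T.not_frontier (T.interior_closure
      (union_subset (T₀.closed_subset ht₀) (T.closed_subset ht))
      (Tri.interior_of_neg h₀ h hx₀ hx hlt hk)) hxf
  · rw [hk]; positivity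

end Triangulation
/-! ### Slicing -/

open scoped ENNReal

def Fint (u : Pt → ℝ) (d : Pt) (x : Pt) : ℝ≥0∞ :=
  ENNReal.ofReal (2 * (u x) ^ 2 + ‖d‖ ^ 2 * ‖fderiv ℝ u x‖ ^ 2)

theorem slice_FTC (t : Tri) (h : t.Nondeg) {u : Pt → ℝ} (hc : ContinuousOn u t.closedHull)
    (hd : DifferentiableOn ℝ u t.openHull) (y d : Pt) {a b : ℝ} (ha : 0 ≤ a) (hab : a < b)
    (hb : b ≤ 1) (hs : ∀ s ∈ Ioo a b, y + s • d ∈ t.openHull) :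
    ENNReal.ofReal ((1 - a) * u (y + a • d) ^ 2) ≤ ENNReal.ofReal ((1 - b) * u (y + b • d) ^ 2)
      + ∫⁻ s in Ioo a b, Fint u d (y + s • d) := by
  have hline : Continuous fun s : ℝ => y + s • d := by fun_prop
  have hcl : ∀ s ∈ Icc a b, y + s • d ∈ t.closedHull := by
    have h1 : MapsTo (fun s : ℝ => y + s • d) (Ioo a b) t.closedHull :=
      fun s hs' => interior_subset (hs s hs')
    have := h1.closure hline
    rw [closure_Ioo hab.ne, t.isClosed_closedHull.closure_eq] at this
    exact this
  have huc : ContinuousOn (fun s : ℝ => u (y + s • d)) (Icc a b) :=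
    hc.comp hline.continuousOn hcl
  set φ : ℝ → ℝ := fun s => 2 * (u (y + s • d)) ^ 2 + ‖d‖ ^ 2 * ‖fderiv ℝ u (y + s • d)‖ ^ 2 with hφ
  have hφ0 : ∀ s, 0 ≤ φ s := fun s => by positivity
  by_cases htop : ∫⁻ s in Ioo a b, Fint u d (y + s • d) = ⊤
  · rw [htop]; simp
  have hmeas : AEStronglyMeasurable φ (volume.restrict (Icc a b)) := by
    have m1 : AEStronglyMeasurable (fun s : ℝ => u (y + s • d)) (volume.restrict (Icc a b)) :=
      huc.aestronglyMeasurable measurableSet_Icc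
    have m2 : Measurable fun s : ℝ => ‖fderiv ℝ u (y + s • d)‖ :=
      (measurable_fderiv ℝ u).norm.comp hline.measurable
    have m3 := (m2.pow_const 2).const_mul (‖d‖ ^ 2)
    exact ((m1.pow 2).const_mul 2).add m3.aestronglyMeasurable
  have hIφ : IntegrableOn φ (Icc a b) := by
    refine ⟨hmeas, ?_⟩
    rw [hasFiniteIntegral_iff_ofReal (Filter.Eventually.of_forall hφ0)]
    rw [← restrict_Ioo_eq_restrict_Icc]
    exact lt_top_iff_ne_top.2 htop
  have main := intervalIntegral.sub_le_integral_of_hasDeriv_right_of_le (a := a) (b := b)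
    (g := fun s => -((1 - s) * u (y + s • d) ^ 2))
    (g' := fun s => u (y + s • d) ^ 2
      - (1 - s) * (2 * u (y + s • d) * fderiv ℝ u (y + s • d) d)) (φ := φ)
    hab.le (((continuous_const.sub continuous_id).continuousOn.mul (huc.pow 2)).neg) ?_ hIφ ?_
  · have e : ∫⁻ s in Ioo a b, Fint u d (y + s • d) = ENNReal.ofReal (∫ s in a..b, φ s) := by
      rw [intervalIntegral.integral_of_le hab.le, restrict_Ioo_eq_restrict_Ioc]
      rw [ofReal_integral_eq_lintegral_ofReal (hIφ.mono_set Ioc_subset_Icc_self)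
        (Filter.Eventually.of_forall hφ0)]
      rfl
    rw [e, ← ENNReal.ofReal_add]
    · apply ENNReal.ofReal_le_ofReal
      linarith
    · have : 0 ≤ 1 - b := by linarith
      positivity
    · exact intervalIntegral.integral_nonneg hab.le fun s _ => hφ0 s
  · intro s hs'
    have hD : HasFDerivAt u (fderiv ℝ u (y + s • d)) (y + s • d) :=
      ((hd _ (hs s hs')).differentiableAt (t.isOpen_openHull.mem_nhds (hs s hs'))).hasFDerivAt
    have hl : HasDerivAt (fun s : ℝ => y + s • d) d s := by
      simpa using ((hasDerivAt_id s).smul_const d).const_add y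
    have h1 : HasDerivAt (fun s : ℝ => u (y + s • d)) (fderiv ℝ u (y + s • d) d) s :=
      hD.comp_hasDerivAt s hl
    have h2 : HasDerivAt (fun s : ℝ => 1 - s) (-1) s := by
      simpa using (hasDerivAt_id s).const_sub 1
    have h3 := (h2.mul (h1.pow 2)).neg
    refine HasDerivAt.hasDerivWithinAt ?_
    convert h3 using 1
    · rfl
    · simp only [Nat.cast_ofNat, Pi.pow_apply]
      norm_num
      ring
  · intro s hs'
    have hle : |fderiv ℝ u (y + s • d) d| ≤ ‖fderiv ℝ u (y + s • d)‖ * ‖d‖ := by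
      simpa using (fderiv ℝ u (y + s • d)).le_opNorm d
    have hsq : (fderiv ℝ u (y + s • d) d) ^ 2 ≤ ‖d‖ ^ 2 * ‖fderiv ℝ u (y + s • d)‖ ^ 2 := by
      have := pow_le_pow_left₀ (abs_nonneg _) hle 2
      rw [sq_abs] at this
      nlinarith
    simp only [hφ]
    set w := fderiv ℝ u (y + s • d) d
    set v := u (y + s • d)
    have h0 : 0 ≤ 1 - s := by linarith [hs'.2]
    have h1 : 1 - s ≤ 1 := by linarith [hs'.1]
    have : -((1 - s) * (2 * v * w)) ≤ v ^ 2 + w ^ 2 := by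
      nlinarith [mul_nonneg h0 (sq_nonneg (v + w)), mul_nonneg (sub_nonneg.2 h1) (sq_nonneg v),
        mul_nonneg (sub_nonneg.2 h1) (sq_nonneg w)]
    linarith

def Sl (y d : Pt) (t : Tri) : Set ℝ := {s | y + s • d ∈ t.openHull}

theorem Sl_eq (t : Tri) {y d : Pt} (hd : d ≠ 0) (hne : (Sl y d t).Nonempty) :
    sInf (Sl y d t) < sSup (Sl y d t) ∧ Sl y d t = Ioo (sInf (Sl y d t)) (sSup (Sl y d t)) := by
  have hline : Continuous fun s : ℝ => y + s • d := by fun_prop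
  have hopen : IsOpen (Sl y d t) := t.isOpen_openHull.preimage hline
  have hconv : Convex ℝ (Sl y d t) := by
    have hC : Convex ℝ t.openHull := (convex_convexHull ℝ _).interior
    intro s hs s' hs' a b ha hb hab
    have := hC hs hs' ha hb hab
    change y + (a • s + b • s') • d ∈ t.openHull
    convert this using 1
    rw [smul_add, smul_add, add_add_add_comm, ← add_smul, hab]
    simp only [smul_eq_mul]; module
  obtain ⟨M, hM⟩ := t.isCompact_closedHull.isBounded.exists_norm_le
  have hdn : 0 < ‖d‖ := norm_pos_iff.2 hd
  have hbd : ∀ s ∈ Sl y d t, |s| ≤ (M + ‖y‖) / ‖d‖ := by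
    intro s hs
    have h1 := hM _ (interior_subset hs)
    rw [le_div_iff₀ hdn]
    have h2 : ‖s • d‖ ≤ ‖y + s • d‖ + ‖y‖ := by
      have := norm_sub_le (y + s • d) y
      simpa using this
    rw [norm_smul, Real.norm_eq_abs] at h2
    linarith
  have hbb : BddBelow (Sl y d t) := ⟨_, fun s hs => (abs_le.1 (hbd s hs)).1⟩
  have hba : BddAbove (Sl y d t) := ⟨_, fun s hs => (abs_le.1 (hbd s hs)).2⟩
  have hsub : Sl y d t ⊆ Ioo (sInf (Sl y d t)) (sSup (Sl y d t)) := by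
    intro s hs
    obtain ⟨ε, hε, hball⟩ := Metric.isOpen_iff.1 hopen s hs
    have m1 : s - ε / 2 ∈ Sl y d t := hball (by
      rw [Metric.mem_ball, Real.dist_eq]; rw [abs_lt]; constructor <;> linarith)
    have m2 : s + ε / 2 ∈ Sl y d t := hball (by
      rw [Metric.mem_ball, Real.dist_eq]; rw [abs_lt]; constructor <;> linarith)
    have := csInf_le hbb m1
    have := le_csSup hba m2
    constructor <;> linarith
  have heq := hsub.antisymm (IsConnected.Ioo_csInf_csSup_subset ⟨hne, hconv.isPreconnected⟩ hbb hba)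
  refine ⟨?_, heq⟩
  obtain ⟨s, hs⟩ := hne
  have := hsub hs
  exact this.1.trans this.2

/-- The jump contribution of edge `i` of `t` on the line `y + ℝ d`. -/
def hJ (Ω : Set Pt) (u : Tri → Pt → ℝ) (nb : Tri → Fin 3 → Tri) (t : Tri) (i : Fin 3) (d y : Pt) :
    ℝ≥0∞ :=
  if ¬ Triangulation.bd Ω t i ∧ cr (t.Q i - t.P i) d ≠ 0 ∧
      cr (y - t.P i) d / cr (t.Q i - t.P i) d ∈ Ioo (0:ℝ) 1 then
    ENNReal.ofReal |u t (t.P i + (cr (y - t.P i) d / cr (t.Q i - t.P i) d) • (t.Q i - t.P i)) ^ 2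
      - u (nb t i) (t.P i + (cr (y - t.P i) d / cr (t.Q i - t.P i) d) • (t.Q i - t.P i)) ^ 2|
  else 0

def IsNb {Ω : Set Pt} (T : Triangulation Ω) (nb : Tri → Fin 3 → Tri) : Prop :=
  ∀ t ∈ T.tris, ∀ i, ¬ Triangulation.bd Ω t i → nb t i ∈ T.tris ∧ nb t i ≠ t ∧
    ∃ i', SameEdge (t.P i, t.Q i) ((nb t i).P i', (nb t i).Q i')

theorem next_exists {Ω : Set Pt} (T : Triangulation Ω) (u : Tri → Pt → ℝ)
    (nb : Tri → Fin 3 → Tri) (hnb : IsNb T nb) {y d : Pt} (hd : d ≠ 0)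
    (hgen : ∀ t ∈ T.tris, ∀ i, cr (y - t.P i) d ≠ 0)
    {t : Tri} (ht : t ∈ T.tris) (hne : (Sl y d t).Nonempty)
    (hz : y + sSup (Sl y d t) • d ∈ Ω) (hb0 : 0 ≤ sSup (Sl y d t)) (hb1 : sSup (Sl y d t) ≤ 1) :
    ∃ t' ∈ T.tris, (Sl y d t').Nonempty ∧ sInf (Sl y d t') = sSup (Sl y d t) ∧
      ENNReal.ofReal ((1 - sSup (Sl y d t)) * u t (y + sSup (Sl y d t) • d) ^ 2) ≤
      ENNReal.ofReal ((1 - sSup (Sl y d t)) * u t' (y + sSup (Sl y d t) • d) ^ 2)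
        + ∑ i, hJ Ω u nb t i d y := by
  obtain ⟨hab, hS⟩ := Sl_eq t hd hne
  set a := sInf (Sl y d t)
  set b := sSup (Sl y d t)
  have h := T.nondeg t ht
  have hline : Continuous fun s : ℝ => y + s • d := by fun_prop
  have hcl : y + b • d ∈ t.closedHull := by
    have h1 : MapsTo (fun s : ℝ => y + s • d) (Ioo a b) t.closedHull := by
      intro s hs'
      rw [← hS] at hs'
      exact interior_subset hs'
    have := h1.closure hline
    rw [closure_Ioo hab.ne, t.isClosed_closedHull.closure_eq] at this
    exact this ⟨hab.le, le_rfl⟩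
  have hno : y + b • d ∉ t.openHull := by
    intro hb
    have : b ∈ Sl y d t := hb
    rw [hS] at this
    exact lt_irrefl _ this.2
  have hvert : ∀ i, y + b • d ≠ t.P i := by
    intro i hi
    apply hgen t ht i
    rw [← hi]; simp [cr]; ring
  obtain ⟨i, hi⟩ := t.exists_OE h hcl hno hvert
  have hnbd : ¬ Triangulation.bd Ω t i := fun hb =>
    T.not_frontier hz (hb (Triangulation.OE_seg h hi))
  obtain ⟨ht', hne', i', hse⟩ := hnb t ht i hnbd
  set t' := nb t i with ht'def
  obtain ⟨hi', κ, hκ, hk⟩ := T.shared_neg ht ht' hne' hse hi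
  have h' := T.nondeg t' ht'
  -- slope is negative
  have hm : (a + b) / 2 ∈ Sl y d t := by rw [hS]; constructor <;> linarith
  have hpos := (t.mem_openHull h _).1 hm i
  have hsl : t.slope i d < 0 := by
    have e1 := t.bary_move i y d b
    have e2 := t.bary_move i y d ((a + b) / 2)
    rw [hi.1] at e1
    rw [e2] at hpos
    nlinarith
  have hsl' : 0 < t'.slope i' d := by rw [hk]; nlinarith
  have hmv := hi'.move h' hsl'
  have hmv' : ∀ᶠ s in nhdsWithin (0:ℝ) (Ioi 0), b + s ∈ Sl y d t' := by
    filter_upwards [hmv] with s hs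
    change y + (b + s) • d ∈ t'.openHull
    convert hs using 1
    module
  have hne2 : (Sl y d t').Nonempty := by
    obtain ⟨s, hs⟩ := hmv'.exists
    exact ⟨_, hs⟩
  obtain ⟨hab', hS'⟩ := Sl_eq t' hd hne2
  have hbn : b ∉ Sl y d t' := hi'.not_mem_open h'
  have hab2 : sInf (Sl y d t') = b := by
    apply le_antisymm
    · by_contra hlt
      push Not at hlt
      have : ∀ᶠ s in nhdsWithin (0:ℝ) (Ioi 0), s < sInf (Sl y d t') - b :=
        (gt_mem_nhds (by linarith)).filter_mono nhdsWithin_le_nhds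
      obtain ⟨s, h1, h2⟩ := (hmv'.and this).exists
      rw [hS'] at h1
      linarith [h1.1]
    · by_contra hlt
      push Not at hlt
      apply hbn
      rw [hS']
      refine ⟨hlt, ?_⟩
      obtain ⟨s, h1, h2⟩ := (hmv'.and self_mem_nhdsWithin).exists
      rw [hS'] at h1
      have h2' : (0:ℝ) < s := h2
      linarith [h1.2]
  refine ⟨t', ht', hne2, hab2, ?_⟩
  -- the jump
  have hcr : cr (t.Q i - t.P i) d ≠ 0 := by
    intro h0
    rw [Tri.slope, h0] at hsl
    simp at hsl
  obtain ⟨σ, h0, h1, hσ⟩ := t.OE_openSeg h i hi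
  have hσ' : cr (y - t.P i) d / cr (t.Q i - t.P i) d = σ := by
    rw [div_eq_iff hcr]
    have : y = t.P i + σ • (t.Q i - t.P i) - b • d := by rw [← hσ]; simp
    rw [this]; simp [cr]; ring
  have hJi : hJ Ω u nb t i d y = ENNReal.ofReal |u t (y + b • d) ^ 2 - u t' (y + b • d) ^ 2| := by
    unfold hJ
    rw [hσ', if_pos ⟨hnbd, hcr, h0, h1⟩, ← hσ]
  have hle : ENNReal.ofReal |u t (y + b • d) ^ 2 - u t' (y + b • d) ^ 2|
      ≤ ∑ i, hJ Ω u nb t i d y := by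
    rw [← hJi]
    exact Finset.single_le_sum (f := fun i => hJ Ω u nb t i d y) (fun _ _ => zero_le)
      (Finset.mem_univ i)
  refine le_trans ?_ (add_le_add le_rfl hle)
  rw [← ENNReal.ofReal_add (mul_nonneg (by linarith) (sq_nonneg _)) (abs_nonneg _)]
  apply ENNReal.ofReal_le_ofReal
  have e1 := le_abs_self (u t (y + b • d) ^ 2 - u t' (y + b • d) ^ 2)
  have e2 := abs_nonneg (u t (y + b • d) ^ 2 - u t' (y + b • d) ^ 2)
  nlinarith

theorem line_lemma {Ω : Set Pt} (T : Triangulation Ω) (u : Tri → Pt → ℝ) (hu : T.PwH1 u)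
    (nb : Tri → Fin 3 → Tri) (hnb : IsNb T nb) {y d : Pt} (hd : d ≠ 0)
    (hgen : ∀ t ∈ T.tris, ∀ i, cr (y - t.P i) d ≠ 0)
    (hin : ∀ s ∈ Ioo (0:ℝ) 1, y + s • d ∈ Ω) (hy : y ∉ Ω) :
    ∑ t ∈ T.tris.filter (fun t => ∀ᶠ s in nhdsWithin (0:ℝ) (Ioi 0), y + s • d ∈ t.openHull),
      ENNReal.ofReal (u t y ^ 2) ≤
    ∑ t ∈ T.tris, (∫⁻ s in Ioo (0:ℝ) 1, t.openHull.indicator (Fint (u t) d) (y + s • d)) +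
    ∑ t ∈ T.tris, ∑ i, hJ Ω u nb t i d y := by
  set a : Tri → ℝ := fun t => sInf (Sl y d t) with ha
  set b : Tri → ℝ := fun t => sSup (Sl y d t) with hb
  have h0S : ∀ t ∈ T.tris, (0:ℝ) ∉ Sl y d t := by
    intro t ht h0
    have : y + (0:ℝ) • d ∈ t.openHull := h0
    rw [zero_smul, add_zero] at this
    exact hy (T.open_subset ht this)
  set T1 := T.tris.filter (fun t => (Sl y d t).Nonempty ∧ 0 ≤ a t ∧ a t < 1) with hT1
  set G : Tri → ℝ → ℝ≥0∞ := fun t s => ENNReal.ofReal ((1 - s) * u t (y + s • d) ^ 2) with hG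
  set I : Tri → ℝ≥0∞ :=
    fun t => ∫⁻ s in Ioo (0:ℝ) 1, t.openHull.indicator (Fint (u t) d) (y + s • d) with hI
  set J : Tri → ℝ≥0∞ := fun t => ∑ i, hJ Ω u nb t i d y with hJdef
  have step1 : ∀ t ∈ T1, G t (a t) ≤ G t (min (b t) 1) + I t := by
    intro t ht
    simp only [hT1, Finset.mem_filter] at ht
    obtain ⟨htT, hne, ha0, ha1⟩ := ht
    obtain ⟨hab, hS⟩ := Sl_eq t hd hne
    obtain ⟨hc, hdif, -, -⟩ := hu t htT
    have hmem : ∀ s ∈ Ioo (a t) (min (b t) 1), y + s • d ∈ t.openHull := by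
      intro s hs
      have : s ∈ Sl y d t := by
        rw [hS]; exact ⟨hs.1, hs.2.trans_le (min_le_left _ _)⟩
      exact this
    refine (slice_FTC t (T.nondeg t htT) hc hdif y d (a := a t) (b := min (b t) 1) ha0
      (lt_min hab ha1) (min_le_right _ _) hmem).trans ?_
    refine add_le_add le_rfl ?_
    calc ∫⁻ s in Ioo (a t) (min (b t) 1), Fint (u t) d (y + s • d)
        = ∫⁻ s in Ioo (a t) (min (b t) 1), t.openHull.indicator (Fint (u t) d) (y + s • d) := by
          refine setLIntegral_congr_fun measurableSet_Ioo fun s hs => ?_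
          simp only [indicator_of_mem (hmem s hs)]
      _ ≤ I t := lintegral_mono_set (Ioo_subset_Ioo ha0 (min_le_right _ _))
  set T2 := T1.filter (fun t => b t < 1) with hT2
  have step2 : ∀ t ∈ T2, ∃ t', t' ∈ T1 ∧ 0 < a t' ∧ a t' = b t ∧ G t (b t) ≤ G t' (a t') + J t := by
    intro t ht
    simp only [hT2, hT1, Finset.mem_filter] at ht
    obtain ⟨⟨htT, hne, ha0, ha1⟩, hb1⟩ := ht
    obtain ⟨hab, hS⟩ := Sl_eq t hd hne
    have hb0 : 0 < b t := lt_of_le_of_lt ha0 hab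
    obtain ⟨t', ht', hne', hab', hle⟩ := next_exists T u nb hnb hd hgen htT hne
      (hin _ ⟨hb0, hb1⟩) hb0.le hb1.le
    have e : a t' = b t := hab'
    refine ⟨t', ?_, by rw [e]; exact hb0, e, by rw [e]; exact hle⟩
    simp only [hT1, Finset.mem_filter]
    exact ⟨ht', hne', by rw [e]; exact hb0.le, by rw [e]; exact hb1⟩
  choose! nx hnx1 hnx2 hnx3 hnx4 using step2
  have hinj : Set.InjOn nx T2 := by
    intro t₁ h1 t₂ h2 he
    have h1' := h1
    have h2' := h2
    simp only [hT2, hT1, Finset.coe_filter, Finset.mem_filter, mem_ofPred_eq] at h1 h2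
    by_contra hne
    obtain ⟨hab1, hS1⟩ := Sl_eq t₁ hd h1.1.2.1
    obtain ⟨hab2, hS2⟩ := Sl_eq t₂ hd h2.1.2.1
    have e : b t₁ = b t₂ := by rw [← hnx3 t₁ h1', ← hnx3 t₂ h2', he]
    set c := (max (a t₁) (a t₂) + b t₁) / 2 with hc
    have hlt : max (a t₁) (a t₂) < b t₁ := max_lt hab1 (by rw [e]; exact hab2)
    have hc1 : c < b t₁ := by rw [hc]; linarith
    have hc2 : max (a t₁) (a t₂) < c := by rw [hc]; linarith
    have m1 : c ∈ Sl y d t₁ := by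
      rw [hS1]; exact ⟨lt_of_le_of_lt (le_max_left _ _) hc2, hc1⟩
    have m2 : c ∈ Sl y d t₂ := by
      rw [hS2]; exact ⟨lt_of_le_of_lt (le_max_right _ _) hc2, by rw [e] at hc1; exact hc1⟩
    have := T.disj t₁ h1.1.1 t₂ h2.1.1 hne
    have m : y + c • d ∈ t₁.openHull ∩ t₂.openHull := ⟨m1, m2⟩
    rw [this] at m
    exact m
  have stepY : ∑ t ∈ T1, G t (min (b t) 1) ≤ ∑ t ∈ T1.filter (fun t => 0 < a t), G t (a t)
      + ∑ t ∈ T.tris, J t := by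
    calc ∑ t ∈ T1, G t (min (b t) 1) = ∑ t ∈ T2, G t (b t) := by
          rw [hT2, Finset.sum_filter (s := T1)]
          refine Finset.sum_congr rfl fun t _ => ?_
          split_ifs with hlt
          · rw [min_eq_left hlt.le]
          · rw [min_eq_right (not_lt.1 hlt)]; simp [hG]
      _ ≤ ∑ t ∈ T2, (G (nx t) (a (nx t)) + J t) := Finset.sum_le_sum fun t ht => hnx4 t ht
      _ = ∑ t ∈ T2, G (nx t) (a (nx t)) + ∑ t ∈ T2, J t := Finset.sum_add_distrib
      _ = ∑ t ∈ T2.image nx, G t (a t) + ∑ t ∈ T2, J t := by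
          rw [Finset.sum_image hinj]
      _ ≤ _ := by
          refine add_le_add (Finset.sum_le_sum_of_subset ?_) (Finset.sum_le_sum_of_subset ?_)
          · intro t ht
            obtain ⟨t₁, h1, rfl⟩ := Finset.mem_image.1 ht
            exact Finset.mem_filter.2 ⟨hnx1 t₁ h1, hnx2 t₁ h1⟩
          · exact (Finset.filter_subset _ _).trans (Finset.filter_subset _ _)
  have stepX : ∑ t ∈ T1, G t (a t) = ∑ t ∈ T1.filter (fun t => 0 < a t), G t (a t)
      + ∑ t ∈ T1.filter (fun t => ¬ 0 < a t), G t (a t) :=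
    (Finset.sum_filter_add_sum_filter_not _ _ _).symm
  have hfin : ∑ t ∈ T1.filter (fun t => 0 < a t), G t (a t) ≠ ⊤ :=
    ENNReal.sum_ne_top.2 fun t _ => ENNReal.ofReal_ne_top
  have final : ∑ t ∈ T1.filter (fun t => ¬ 0 < a t), G t (a t) ≤
      ∑ t ∈ T.tris, I t + ∑ t ∈ T.tris, J t := by
    have h1 : ∑ t ∈ T1, G t (a t) ≤ ∑ t ∈ T1, G t (min (b t) 1) + ∑ t ∈ T.tris, I t := by
      refine (Finset.sum_le_sum step1).trans ?_
      rw [Finset.sum_add_distrib]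
      exact add_le_add le_rfl (Finset.sum_le_sum_of_subset (Finset.filter_subset _ _))
    rw [stepX] at h1
    have h2 := h1.trans (add_le_add stepY le_rfl)
    rw [add_assoc] at h2
    have h3 := (ENNReal.add_le_add_iff_left hfin).1 h2
    rwa [add_comm (∑ t ∈ T.tris, J t)] at h3
  refine le_trans ?_ final
  refine le_trans (le_of_eq ?_) (Finset.sum_le_sum_of_subset (f := fun t => G t (a t))
    (s := T.tris.filter
      (fun t => ∀ᶠ s in nhdsWithin (0:ℝ) (Ioi 0), y + s • d ∈ t.openHull)) ?_)
  all_goals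
    have hkey : ∀ t ∈ T.tris.filter
        (fun t => ∀ᶠ s in nhdsWithin (0:ℝ) (Ioi 0), y + s • d ∈ t.openHull),
        t ∈ T.tris ∧ (Sl y d t).Nonempty ∧ a t = 0 := by
      intro t ht
      obtain ⟨htT, hev⟩ := Finset.mem_filter.1 ht
      have hne : (Sl y d t).Nonempty := by
        obtain ⟨s, hs⟩ := hev.exists
        exact ⟨s, hs⟩
      obtain ⟨hab, hS⟩ := Sl_eq t hd hne
      have hev' : ∀ᶠ s in nhdsWithin (0:ℝ) (Ioi 0), s ∈ Sl y d t := hev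
      refine ⟨htT, hne, le_antisymm ?_ ?_⟩
      · by_contra hlt
        push Not at hlt
        have : ∀ᶠ s in nhdsWithin (0:ℝ) (Ioi 0), s < a t :=
          (gt_mem_nhds hlt).filter_mono nhdsWithin_le_nhds
        obtain ⟨s, h1, h2⟩ := (hev'.and this).exists
        rw [hS] at h1
        exact lt_asymm h1.1 h2
      · by_contra hlt
        push Not at hlt
        apply h0S t htT
        rw [hS]
        refine ⟨hlt, ?_⟩
        obtain ⟨s, h1, h2⟩ := (hev'.and self_mem_nhdsWithin).exists
        rw [hS] at h1
        exact lt_trans h2 h1.2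
  · refine Finset.sum_congr rfl fun t ht => ?_
    obtain ⟨-, -, h0⟩ := hkey t ht
    simp [hG, h0]
  · intro t ht
    obtain ⟨h1, h2, h0⟩ := hkey t ht
    simp [hT1, h1, h2, h0]
/-! ### Measure theory -/

theorem lint_aff {α : ℝ} (hα : α ≠ 0) (β : ℝ) (f : ℝ → ℝ≥0∞) :
    ∫⁻ r, f (α * r + β) = ENNReal.ofReal |α|⁻¹ * ∫⁻ r, f r := by
  have h1 : ∫⁻ r, f (α * r + β) = ∫⁻ r, f (r + β) ∂(Measure.map (fun r => α * r) volume) := by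
    have := (Homeomorph.mulLeft₀ α hα).toMeasurableEquiv.measurableEmbedding.lintegral_map
      (μ := (volume : Measure ℝ)) (fun r => f (r + β))
    exact this.symm
  rw [h1, Real.map_volume_mul_left hα, lintegral_smul_measure, lintegral_add_right_eq_self,
    abs_inv, smul_eq_mul]

theorem lint_plane {τ d : Pt} (h : cr τ d ≠ 0) (x : Pt) {F : Pt → ℝ≥0∞} (hF : Measurable F) :
    ∫⁻ r : ℝ, ∫⁻ s : ℝ, F (x + r • τ + s • d) = ENNReal.ofReal |cr τ d|⁻¹ * ∫⁻ y, F y := by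
  set b := (EuclideanSpace.basisFun (Fin 2) ℝ).toBasis with hb
  set M : Matrix (Fin 2) (Fin 2) ℝ := !![τ 0, d 0; τ 1, d 1] with hM
  set L : Pt →ₗ[ℝ] Pt := Matrix.toLin b b M with hL
  have hdet : LinearMap.det L = cr τ d := by
    rw [hL, LinearMap.det_toLin, hM, Matrix.det_fin_two_of, cr]; ring
  have hLv : ∀ v : Pt, L v = v 0 • τ + v 1 • d := by
    intro v
    ext k
    rw [hL, Matrix.toLin_apply]
    fin_cases k <;> simp [hb, Matrix.mulVec, dotProduct, Fin.sum_univ_two, hM] <;> ring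
  have hmap := Measure.map_linearMap_addHaar_eq_smul_addHaar (volume : Measure Pt) (f := L)
    (by rw [hdet]; exact h)
  have hLc : Measurable L := (LinearMap.continuous_of_finiteDimensional L).measurable
  have h1 : ∫⁻ v : Pt, F (x + L v) = ENNReal.ofReal |cr τ d|⁻¹ * ∫⁻ y, F y := by
    have e : ∫⁻ v : Pt, F (x + L v) = ∫⁻ v, F (x + v) ∂(Measure.map L volume) :=
      (lintegral_map (hF.comp (measurable_const_add x)) hLc).symm
    rw [e, hmap, lintegral_smul_measure, lintegral_add_left_eq_self, hdet, smul_eq_mul, abs_inv]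
  rw [← h1]
  have e1 := (EuclideanSpace.volume_preserving_symm_measurableEquiv_toLp (Fin 2))
  have e2 := volume_preserving_finTwoArrow ℝ
  have e3 := e2.comp e1
  have hG : Measurable fun p : ℝ × ℝ => F (x + p.1 • τ + p.2 • d) := hF.comp (by fun_prop)
  have e4 := e3.lintegral_comp hG
  rw [Measure.volume_eq_prod, lintegral_prod _ hG.aemeasurable] at e4
  rw [← e4]
  refine lintegral_congr fun v => ?_
  rw [hLv, add_assoc]
  rfl

/-- the open segment -/
def oseg (p v : Pt) : Set Pt := (fun σ : ℝ => p + σ • v) '' Ioo (0:ℝ) 1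

theorem lint_oseg (p v : Pt) (hv : v ≠ 0) (f : Pt → ℝ≥0∞) :
    ENNReal.ofReal ‖v‖ * ∫⁻ σ in Ioo (0:ℝ) 1, f (p + σ • v) =
      ∫⁻ y in oseg p v, f y ∂(μH[1] : Measure Pt) := by
  have hn : 0 < ‖v‖ := norm_pos_iff.2 hv
  set g : ℝ → Pt := fun s => p + (s / ‖v‖) • v with hg
  have hiso : Isometry g := by
    refine Isometry.of_dist_eq fun s s' => ?_
    rw [hg, dist_add_left, dist_eq_norm, ← sub_smul, norm_smul, Real.dist_eq, ← sub_div, norm_div,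
      norm_norm, div_mul_cancel₀ _ hn.ne', Real.norm_eq_abs]
  have hemb : MeasurableEmbedding g := hiso.isClosedEmbedding.measurableEmbedding
  have hmap := hiso.map_hausdorffMeasure (d := 1) (Or.inl zero_le_one)
  rw [hausdorffMeasure_real] at hmap
  have hosr : oseg p v = g '' (Ioo 0 ‖v‖) := by
    ext y
    constructor
    · rintro ⟨σ, hσ, rfl⟩
      refine ⟨σ * ‖v‖, ⟨mul_pos hσ.1 hn, by nlinarith [hσ.2]⟩, ?_⟩
      simp [hg, hn.ne']
    · rintro ⟨s, hs, rfl⟩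
      exact ⟨s / ‖v‖, ⟨div_pos hs.1 hn, (div_lt_one hn).2 hs.2⟩, rfl⟩
  have hms : MeasurableSet (oseg p v) := by
    rw [hosr]; exact hemb.measurableSet_image.2 measurableSet_Ioo
  have hsub : oseg p v ⊆ range g := by rw [hosr]; exact image_subset_range _ _
  have h1 : ∫⁻ y in oseg p v, f y ∂(μH[1] : Measure Pt) = ∫⁻ s in Ioo 0 ‖v‖, f (g s) := by
    have : (μH[1] : Measure Pt).restrict (oseg p v) =
        (Measure.map g volume).restrict (oseg p v) := by
      rw [hmap, Measure.restrict_restrict hms, inter_eq_left.2 hsub]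
    rw [this, hemb.restrict_map, hemb.lintegral_map, hosr, preimage_image_eq _ hemb.injective]
  rw [h1]
  have h2 := lint_aff (α := ‖v‖⁻¹) (inv_ne_zero hn.ne') 0
    ((Ioo (0:ℝ) 1).indicator fun σ => f (p + σ • v))
  rw [lintegral_indicator measurableSet_Ioo] at h2
  rw [abs_inv, inv_inv, abs_of_pos hn] at h2
  rw [← h2, ← lintegral_indicator measurableSet_Ioo]
  refine lintegral_congr fun s => ?_
  by_cases hs : s ∈ Ioo 0 ‖v‖
  · have : ‖v‖⁻¹ * s + 0 ∈ Ioo (0:ℝ) 1 := by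
      rw [add_zero, inv_mul_eq_div]; exact ⟨div_pos hs.1 hn, (div_lt_one hn).2 hs.2⟩
    rw [indicator_of_mem hs, indicator_of_mem this, hg, add_zero, inv_mul_eq_div]
  · have : ‖v‖⁻¹ * s + 0 ∉ Ioo (0:ℝ) 1 := by
      rw [add_zero, inv_mul_eq_div]
      exact fun h' => hs ⟨by simpa [hn] using (div_pos_iff_of_pos_right hn).1 h'.1,
        (div_lt_one hn).1 h'.2⟩
    rw [indicator_of_notMem hs, indicator_of_notMem this]

theorem meas_ind (t : Tri) {u : Pt → ℝ} (hc : ContinuousOn u t.closedHull) (d : Pt) :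
    Measurable (t.openHull.indicator (Fint u d)) := by
  have ho : MeasurableSet t.openHull := t.isOpen_openHull.measurableSet
  have hm : Measurable (t.openHull.piecewise u 0) :=
    (hc.mono interior_subset).measurable_piecewise continuous_const.continuousOn ho
  have : t.openHull.indicator (Fint u d) = t.openHull.indicator (fun x =>
      ENNReal.ofReal (2 * (t.openHull.piecewise u 0 x) ^ 2 + ‖d‖ ^ 2 * ‖fderiv ℝ u x‖ ^ 2)) := by
    ext x
    by_cases hx : x ∈ t.openHull
    · simp [hx, Fint]
    · simp [hx]
  rw [this]
  refine Measurable.indicator ?_ ho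
  have := (measurable_fderiv ℝ u).norm
  fun_prop

/-- Fubini on a parallelogram. -/
theorem lint_paral (t : Tri) {u : Pt → ℝ} (hc : ContinuousOn u t.closedHull) (x τ d : Pt)
    (h : cr τ d ≠ 0) :
    ∫⁻ r in Ioo (0:ℝ) 1, ∫⁻ s in Ioo (0:ℝ) 1,
      t.openHull.indicator (Fint u d) (x + r • τ + s • d) ≤
      ENNReal.ofReal |cr τ d|⁻¹ * ∫⁻ y in t.openHull, Fint u d y := by
  rw [← lintegral_indicator t.isOpen_openHull.measurableSet, ← lint_plane h x (meas_ind t hc d)]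
  refine (setLIntegral_le_lintegral _ _).trans (lintegral_mono fun r => ?_)
  exact setLIntegral_le_lintegral _ _

theorem half_split (g : ℝ → ℝ≥0∞) : ∫⁻ σ in Ioo (0:ℝ) 1, g σ ≤
    (ENNReal.ofReal (1/2) * ∫⁻ r in Ioo (0:ℝ) 1, g (r / 2)) +
      (ENNReal.ofReal (1/2) * ∫⁻ r in Ioo (0:ℝ) 1, g (1 - r / 2)) := by
  have h1 := lint_aff (α := 2) (by norm_num) 0 ((Ioo (0:ℝ) 1).indicator fun r => g (r / 2))
  have h2 := lint_aff (α := -2) (by norm_num) 2 ((Ioo (0:ℝ) 1).indicator fun r => g (1 - r / 2))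
  rw [lintegral_indicator measurableSet_Ioo] at h1 h2
  have e1 : ∫⁻ σ in Ioo (0:ℝ) (1/2), g σ =
      ∫⁻ σ, (Ioo (0:ℝ) 1).indicator (fun r => g (r / 2)) (2 * σ + 0) := by
    rw [← lintegral_indicator measurableSet_Ioo]
    refine lintegral_congr fun r => ?_
    simp only [indicator, mem_Ioo]
    have : (0 < r ∧ r < 1/2) ↔ (0 < 2 * r + 0 ∧ 2 * r + 0 < 1) := by
      constructor <;> rintro ⟨a, b⟩ <;> constructor <;> linarith
    rw [if_congr this _ rfl]
    congr 2; ring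
  have e2 : ∫⁻ σ in Ioo (1/2:ℝ) 1, g σ =
      ∫⁻ σ, (Ioo (0:ℝ) 1).indicator (fun r => g (1 - r / 2)) (-2 * σ + 2) := by
    rw [← lintegral_indicator measurableSet_Ioo]
    refine lintegral_congr fun r => ?_
    simp only [indicator, mem_Ioo]
    have : (1/2 < r ∧ r < 1) ↔ (0 < -2 * r + 2 ∧ -2 * r + 2 < 1) := by
      constructor <;> rintro ⟨a, b⟩ <;> constructor <;> linarith
    rw [if_congr this _ rfl]
    congr 2; ring
  have c1 : |(2:ℝ)|⁻¹ = 1/2 := by norm_num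
  have c2 : |(-2:ℝ)|⁻¹ = 1/2 := by norm_num
  rw [c1] at h1
  rw [c2] at h2
  rw [← h1, ← h2, ← e1, ← e2, restrict_Ioo_eq_restrict_Ioc (a := (0:ℝ)) (b := 1/2)]
  refine le_trans ?_ (lintegral_union_le _ _ _)
  refine lintegral_mono_set fun s hs => ?_
  rcases le_or_gt s (1/2) with h | h
  · exact Or.inl ⟨hs.1, h⟩
  · exact Or.inr ⟨h, hs.2⟩

/-- Local trace inequality. -/
theorem local_trace (t : Tri) (h : t.Nondeg) {u : Pt → ℝ} (hc : ContinuousOn u t.closedHull)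
    (hd : DifferentiableOn ℝ u t.openHull) (i : Fin 3) {D : ℝ} (hD : ∀ b, ‖t.cD i b‖ ≤ D) :
    ∫⁻ σ in Ioo (0:ℝ) 1, ENNReal.ofReal (u (t.P i + σ • (t.Q i - t.P i)) ^ 2) ≤
      ENNReal.ofReal (4 / |t.cross|) *
        ∫⁻ y in t.openHull, ENNReal.ofReal (2 * u y ^ 2 + D ^ 2 * ‖fderiv ℝ u y‖ ^ 2) := by
  have c0 : t.cross ≠ 0 := h
  have key : ∀ b, ∫⁻ r in Ioo (0:ℝ) 1, ENNReal.ofReal (u (t.cX i b + r • t.cT i b) ^ 2) ≤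
      ENNReal.ofReal (4 / |t.cross|) *
        ∫⁻ y in t.openHull, ENNReal.ofReal (2 * u y ^ 2 + D ^ 2 * ‖fderiv ℝ u y‖ ^ 2) := by
    intro b
    have hcr := t.chart_cr i b
    have hcr0 : cr (t.cT i b) (t.cD i b) ≠ 0 := by
      rw [← abs_pos, hcr]; positivity
    calc _ ≤ ∫⁻ r in Ioo (0:ℝ) 1, ∫⁻ s in Ioo (0:ℝ) 1,
          t.openHull.indicator (Fint u (t.cD i b)) (t.cX i b + r • t.cT i b + s • t.cD i b) := by
          refine setLIntegral_mono' measurableSet_Ioo fun r hr => ?_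
          have hin : ∀ s ∈ Ioo (0:ℝ) 1,
              t.cX i b + r • t.cT i b + s • t.cD i b ∈ t.openHull :=
            fun s hs => t.chart_open h i b hr.1 hr.2 hs.1 hs.2
          have := slice_FTC t h hc hd (t.cX i b + r • t.cT i b) (t.cD i b) le_rfl zero_lt_one
            le_rfl hin
          simp only [sub_zero, one_mul, zero_smul, add_zero, sub_self, zero_mul,
            ENNReal.ofReal_zero, zero_add] at this
          refine this.trans (le_of_eq ?_)
          refine setLIntegral_congr_fun measurableSet_Ioo fun s hs => ?_
          simp only [indicator_of_mem (hin s hs)]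
      _ ≤ _ := lint_paral t hc _ _ _ hcr0
      _ ≤ _ := by
          rw [hcr, inv_div]
          gcongr with y
          unfold Fint
          gcongr
          exact hD b
  refine (half_split _).trans ?_
  have k1 := key false
  have k2 := key true
  set B := ENNReal.ofReal (4 / |t.cross|) *
        ∫⁻ y in t.openHull, ENNReal.ofReal (2 * u y ^ 2 + D ^ 2 * ‖fderiv ℝ u y‖ ^ 2)
  have f1 : ∀ r : ℝ, t.P i + (r / 2) • (t.Q i - t.P i) = t.cX i false + r • t.cT i false := by
    intro r; simp [Tri.cX, Tri.cT]; module
  have f2 : ∀ r : ℝ, t.P i + (1 - r / 2) • (t.Q i - t.P i) = t.cX i true + r • t.cT i true := by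
    intro r; simp [Tri.cX, Tri.cT]; module
  simp only [f1, f2]
  calc _ ≤ ENNReal.ofReal (1/2) * B + ENNReal.ofReal (1/2) * B := by gcongr
    _ = B := by
      rw [← add_mul, ← ENNReal.ofReal_add (by norm_num) (by norm_num)]
      norm_num

theorem sum_lint_le {α ι : Type*} [MeasurableSpace α] (μ : Measure α) (s : Finset ι)
    (f : ι → α → ℝ≥0∞) : ∑ i ∈ s, ∫⁻ x, f i x ∂μ ≤ ∫⁻ x, ∑ i ∈ s, f i x ∂μ := by
  induction s using Finset.induction_on with
  | empty => simp
  | insert a s ha ih =>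
    simp only [Finset.sum_insert ha]
    exact (add_le_add le_rfl ih).trans (le_lintegral_add _ _)

theorem shape_edge (t : Tri) (h : t.Nondeg) {K : ℝ} (hK : t.shapeReg ≤ K) (i : Fin 3) :
    ‖t.Q i - t.P i‖ ^ 2 ≤ 2 * K * |t.cross| := by
  have c0 : 0 < |t.cross| := abs_pos.2 h
  have hsq : ∀ v : Pt, ‖v‖ ^ 2 = v 0 ^ 2 + v 1 ^ 2 := by
    intro v; simp [EuclideanSpace.norm_sq_eq, Fin.sum_univ_two]
  have hcr : ∀ v w : Pt, |cr v w| ≤ ‖v‖ * ‖w‖ := by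
    intro v w
    apply abs_le_of_sq_le_sq _ (by positivity)
    rw [mul_pow, hsq, hsq, cr]
    nlinarith [sq_nonneg (v 0 * w 0 + v 1 * w 1)]
  have ha : 0 ≤ t.la := dist_nonneg
  have hb : 0 ≤ t.lb := dist_nonneg
  have hc : 0 ≤ t.lc := dist_nonneg
  have hbc : |t.cross| ≤ t.lc * t.lb := by
    have := hcr (t.B - t.A) (t.C - t.A)
    rw [← dist_eq_norm, ← dist_eq_norm, dist_comm t.B, dist_comm t.C] at this
    refine le_trans (le_of_eq ?_) this
    simp [cr, Tri.cross]
  have hab : |t.cross| ≤ t.la * t.lc := by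
    have := hcr (t.C - t.B) (t.A - t.B)
    rw [← dist_eq_norm, ← dist_eq_norm, dist_comm t.C] at this
    refine le_trans (le_of_eq ?_) this
    congr 1
    simp [cr, Tri.cross]; ring
  have hca : |t.cross| ≤ t.lb * t.la := by
    have := hcr (t.A - t.C) (t.B - t.C)
    rw [← dist_eq_norm, ← dist_eq_norm] at this
    refine le_trans (le_of_eq ?_) this
    congr 1
    simp [cr, Tri.cross]; ring
  have hr : t.shapeReg = t.la * t.lb * t.lc * (t.la + t.lb + t.lc) / (2 * |t.cross| ^ 2) := by
    unfold Tri.shapeReg Tri.circumradius Tri.inradius Tri.area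
    by_cases hz : t.la + t.lb + t.lc = 0
    · simp [hz]
    · field_simp
      ring
  rw [hr, div_le_iff₀ (by positivity)] at hK
  have fin : ∀ a b c : ℝ, 0 ≤ a → 0 ≤ b → 0 ≤ c → |t.cross| ≤ b * c →
      a * b * c * (a + b + c) = t.la * t.lb * t.lc * (t.la + t.lb + t.lc) →
      a ^ 2 ≤ 2 * K * |t.cross| := by
    intro a b c ha hb hc h1 h2
    rw [← h2] at hK
    have h3 : |t.cross| * (a * (a + b + c)) ≤ b * c * (a * (a + b + c)) :=
      mul_le_mul_of_nonneg_right h1 (by positivity)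
    have h4 : |t.cross| * a ^ 2 ≤ |t.cross| * (2 * K * |t.cross|) := by
      have : |t.cross| * a ^ 2 ≤ |t.cross| * (a * (a + b + c)) := by
        apply mul_le_mul_of_nonneg_left _ c0.le
        nlinarith [mul_nonneg ha hb, mul_nonneg ha hc]
      nlinarith
    exact le_of_mul_le_mul_left h4 c0
  rw [← dist_eq_norm]
  fin_cases i
  · have : dist (t.Q 0) (t.P 0) = t.lc := by simp [Tri.P, Tri.Q, Tri.lc, dist_comm]
    simp only [Fin.zero_eta, this]
    exact fin _ _ _ hc ha hb (by linarith) (by ring)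
  · have : dist (t.Q 1) (t.P 1) = t.la := by simp [Tri.P, Tri.Q, Tri.la, dist_comm]
    simp only [Fin.mk_one, this]
    exact fin _ _ _ ha hb hc (by linarith) (by ring)
  · have : dist (t.Q 2) (t.P 2) = t.lb := by simp [Tri.P, Tri.Q, Tri.lb, dist_comm]
    simp only [Fin.reduceFinMk, this]
    exact fin _ _ _ hb ha hc (by linarith) (by ring)
/-! ### Chart estimates -/

/-- Local `H¹` plus jump energy of a triangle. -/
def AG (u : Pt → ℝ) (t : Tri) : ℝ≥0∞ :=
  (∫⁻ y in t.openHull, ENNReal.ofReal (u y ^ 2)) +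
    ∫⁻ y in t.openHull, ENNReal.ofReal (‖fderiv ℝ u y‖ ^ 2)

def Jn (Ω : Set Pt) (u : Tri → Pt → ℝ) (nb : Tri → Fin 3 → Tri) (t : Tri) (i : Fin 3) : ℝ≥0∞ :=
  if Triangulation.bd Ω t i then 0 else
    ∫⁻ σ in Ioo (0:ℝ) 1, ENNReal.ofReal ((u t (t.P i + σ • (t.Q i - t.P i)) -
      u (nb t i) (t.P i + σ • (t.Q i - t.P i))) ^ 2)

def En (Ω : Set Pt) (u : Tri → Pt → ℝ) (nb : Tri → Fin 3 → Tri) (t : Tri) : ℝ≥0∞ :=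
  AG (u t) t + ∑ i, Jn Ω u nb t i

theorem fint_AG (t : Tri) (u : Pt → ℝ) {a D : ℝ} (ha : 0 ≤ a) (haD : a ≤ D) :
    ∫⁻ y in t.openHull, ENNReal.ofReal (2 * u y ^ 2 + a ^ 2 * ‖fderiv ℝ u y‖ ^ 2) ≤
      ENNReal.ofReal (2 + D ^ 2) * AG u t := by
  have hm : Measurable fun y => ENNReal.ofReal (‖fderiv ℝ u y‖ ^ 2) := by
    have := (measurable_fderiv ℝ u).norm
    fun_prop
  unfold AG
  rw [← lintegral_add_right _ hm, ← lintegral_const_mul' _ _ ENNReal.ofReal_ne_top]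
  refine lintegral_mono fun y => ?_
  simp only
  rw [← ENNReal.ofReal_add (by positivity) (by positivity), ← ENNReal.ofReal_mul (by positivity)]
  apply ENNReal.ofReal_le_ofReal
  have h1 : a ^ 2 ≤ D ^ 2 := by gcongr
  have h2 : 0 ≤ u y ^ 2 := by positivity
  have h3 : 0 ≤ ‖fderiv ℝ u y‖ ^ 2 := by positivity
  nlinarith [mul_le_mul_of_nonneg_right h1 h3, mul_nonneg (sq_nonneg D) h2]

theorem cr_le (v w : Pt) : |cr v w| ≤ ‖v‖ * ‖w‖ := by
  have hsq : ∀ v : Pt, ‖v‖ ^ 2 = v 0 ^ 2 + v 1 ^ 2 := by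
    intro v; simp [EuclideanSpace.norm_sq_eq, Fin.sum_univ_two]
  apply abs_le_of_sq_le_sq _ (by positivity)
  rw [mul_pow, hsq, hsq, cr]
  nlinarith [sq_nonneg (v 0 * w 0 + v 1 * w 1)]

theorem seg_closed (t : Tri) (h : t.Nondeg) (i : Fin 3) {σ : ℝ} (hσ : σ ∈ Icc (0:ℝ) 1) :
    t.P i + σ • (t.Q i - t.P i) ∈ t.closedHull := by
  have := (convex_convexHull ℝ {t.A, t.B, t.C}).add_smul_sub_mem (t.P_mem i) (t.Q_mem i) hσ
  exact this

theorem same_seg {p q p' q' : Pt} (hs : SameEdge (p, q) (p', q')) {σ : ℝ} (hσ : σ ∈ Icc (0:ℝ) 1) :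
    ∃ σ' ∈ Icc (0:ℝ) 1, p + σ • (q - p) = p' + σ' • (q' - p') := by
  rcases hs with hs | hs
  · simp only [Prod.mk.injEq] at hs
    exact ⟨σ, hσ, by rw [hs.1, hs.2]⟩
  · simp only [Prod.mk.injEq] at hs
    refine ⟨1 - σ, ⟨by linarith [hσ.2], by linarith [hσ.1]⟩, ?_⟩
    rw [hs.1, hs.2]; module

theorem cont_edge {Ω : Set Pt} (T : Triangulation Ω) {u : Tri → Pt → ℝ} (hu : T.PwH1 u)
    {t : Tri} (ht : t ∈ T.tris) (i : Fin 3) :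
    ContinuousOn (fun σ : ℝ => u t (t.P i + σ • (t.Q i - t.P i))) (Icc 0 1) :=
  (hu t ht).1.comp (by fun_prop) fun _ hσ => seg_closed t (T.nondeg t ht) i hσ

theorem cont_edge_nb {Ω : Set Pt} (T : Triangulation Ω) {u : Tri → Pt → ℝ} (hu : T.PwH1 u)
    {t t' : Tri} (ht' : t' ∈ T.tris) {i i' : Fin 3}
    (hs : SameEdge (t.P i, t.Q i) (t'.P i', t'.Q i')) :
    ContinuousOn (fun σ : ℝ => u t' (t.P i + σ • (t.Q i - t.P i))) (Icc 0 1) := by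
  refine (hu t' ht').1.comp (by fun_prop) fun σ hσ => ?_
  obtain ⟨σ', h', e⟩ := same_seg hs hσ
  rw [e]
  exact seg_closed t' (T.nondeg t' ht') i' h'

theorem hJ_eq {Ω : Set Pt} (u : Tri → Pt → ℝ) (nb : Tri → Fin 3 → Tri) {t : Tri} {i : Fin 3}
    (hb : ¬ Triangulation.bd Ω t i) (x τ d : Pt) (hn : cr (t.Q i - t.P i) d ≠ 0) (r : ℝ) :
    hJ Ω u nb t i d (x + r • τ) = (Ioo (0:ℝ) 1).indicator (fun σ =>
      ENNReal.ofReal |u t (t.P i + σ • (t.Q i - t.P i)) ^ 2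
      - u (nb t i) (t.P i + σ • (t.Q i - t.P i)) ^ 2|)
      (cr τ d / cr (t.Q i - t.P i) d * r + cr (x - t.P i) d / cr (t.Q i - t.P i) d) := by
  have e : cr (x + r • τ - t.P i) d / cr (t.Q i - t.P i) d =
      cr τ d / cr (t.Q i - t.P i) d * r + cr (x - t.P i) d / cr (t.Q i - t.P i) d := by
    rw [div_mul_eq_mul_div, ← add_div]
    congr 1
    simp [cr]; ring
  unfold hJ
  rw [e]
  simp only [indicator, hb, hn, not_false_eq_true, ne_eq, true_and]

theorem hJ_meas {Ω : Set Pt} (T : Triangulation Ω) {u : Tri → Pt → ℝ} (hu : T.PwH1 u)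
    {nb : Tri → Fin 3 → Tri} (hnb : IsNb T nb) {t : Tri} (ht : t ∈ T.tris) (i : Fin 3) (x τ d : Pt) :
    Measurable fun r : ℝ => hJ Ω u nb t i d (x + r • τ) := by
  by_cases hb : Triangulation.bd Ω t i
  · simp [hJ, hb]
  by_cases hn : cr (t.Q i - t.P i) d = 0
  · simp [hJ, hn]
  obtain ⟨h1, -, i', hs⟩ := hnb t ht i hb
  have c1 := (cont_edge T hu ht i).mono Ioo_subset_Icc_self
  have c2 := (cont_edge_nb T hu h1 hs).mono Ioo_subset_Icc_self
  simp only [hJ_eq u nb hb x τ d hn]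
  have hm : Measurable ((Ioo (0:ℝ) 1).indicator (fun σ =>
      ENNReal.ofReal |u t (t.P i + σ • (t.Q i - t.P i)) ^ 2
      - u (nb t i) (t.P i + σ • (t.Q i - t.P i)) ^ 2|)) := by
    have hc : ContinuousOn (fun σ : ℝ => ENNReal.ofReal |u t (t.P i + σ • (t.Q i - t.P i)) ^ 2
      - u (nb t i) (t.P i + σ • (t.Q i - t.P i)) ^ 2|) (Ioo 0 1) :=
      ENNReal.continuous_ofReal.comp_continuousOn ((c1.pow 2).sub (c2.pow 2)).abs
    have := hc.measurable_piecewise (g := fun _ => 0) continuous_const.continuousOn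
      measurableSet_Ioo
    convert this using 1
    ext σ
    simp [indicator, Set.piecewise]
  exact hm.comp (by fun_prop)

theorem jump_pt (l a b : ℝ) (hl : 0 ≤ l) :
    l * |a ^ 2 - b ^ 2| ≤ (1 + l) * (a - b) ^ 2 + l ^ 2 * a ^ 2 := by
  have h1 : |a ^ 2 - b ^ 2| ≤ (a - b) ^ 2 + 2 * (|a| * |a - b|) := by
    have : a ^ 2 - b ^ 2 = 2 * (a * (a - b)) - (a - b) ^ 2 := by ring
    rw [this]
    refine (abs_sub _ _).trans ?_
    rw [abs_mul, abs_mul, abs_two, abs_of_nonneg (sq_nonneg (a - b))]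
    linarith
  have h2 := mul_le_mul_of_nonneg_left h1 hl
  have h3 := sq_nonneg (|a - b| - l * |a|)
  have h4 := sq_abs a
  have h5 := sq_abs (a - b)
  nlinarith

theorem hJ_int {Ω : Set Pt} (T : Triangulation Ω) {K D : ℝ} (hK : T.ShapeRegular K)
    {u : Tri → Pt → ℝ} (hu : T.PwH1 u)
    {nb : Tri → Fin 3 → Tri} (hnb : IsNb T nb) {t : Tri} (ht : t ∈ T.tris) (i : Fin 3)
    (x τ : Pt) {d : Pt} (hc : cr τ d ≠ 0) (hd : ‖d‖ ≤ D) (hl : ‖t.Q i - t.P i‖ ≤ D)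
    (hcD : ∀ b, ‖t.cD i b‖ ≤ D) :
    ∫⁻ r in Ioo (0:ℝ) 1, hJ Ω u nb t i d (x + r • τ) ≤ ENNReal.ofReal (|cr τ d|⁻¹ * D) *
      (ENNReal.ofReal (1 + D) * Jn Ω u nb t i +
        ENNReal.ofReal (8 * K) * (ENNReal.ofReal (2 + D ^ 2) * AG (u t) t)) := by
  by_cases hb : Triangulation.bd Ω t i
  · simp [hJ, hb]
  by_cases hn : cr (t.Q i - t.P i) d = 0
  · simp [hJ, hn]
  have h := T.nondeg t ht
  have c0 : 0 < |t.cross| := abs_pos.2 h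
  set n := t.Q i - t.P i with hndef
  set g : ℝ → ℝ≥0∞ := fun σ => ENNReal.ofReal |u t (t.P i + σ • n) ^ 2
      - u (nb t i) (t.P i + σ • n) ^ 2| with hg
  have s1 : ∫⁻ r in Ioo (0:ℝ) 1, hJ Ω u nb t i d (x + r • τ) ≤
      ENNReal.ofReal (|cr τ d|⁻¹ * |cr n d|) * ∫⁻ σ in Ioo (0:ℝ) 1, g σ := by
    refine (setLIntegral_le_lintegral _ _).trans ?_
    simp only [hJ_eq u nb hb x τ d hn]
    rw [lint_aff (div_ne_zero hc hn), lintegral_indicator measurableSet_Ioo, abs_div, inv_div,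
      div_eq_inv_mul]
  have hD0 : 0 ≤ D := (norm_nonneg _).trans hd
  have s2 : ENNReal.ofReal ‖n‖ * ∫⁻ σ in Ioo (0:ℝ) 1, g σ ≤
      ENNReal.ofReal (1 + D) * Jn Ω u nb t i +
        ENNReal.ofReal (‖n‖ ^ 2) * ∫⁻ σ in Ioo (0:ℝ) 1, ENNReal.ofReal (u t (t.P i + σ • n) ^ 2) := by
    have c1 := (cont_edge T hu ht i).mono Ioo_subset_Icc_self
    have hm : AEMeasurable (fun σ => ENNReal.ofReal (‖n‖ ^ 2) *
        ENNReal.ofReal (u t (t.P i + σ • n) ^ 2)) (volume.restrict (Ioo (0:ℝ) 1)) := by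
      apply AEMeasurable.const_mul
      exact (ENNReal.continuous_ofReal.comp_continuousOn (c1.pow 2)).aemeasurable measurableSet_Ioo
    rw [Jn, if_neg hb, ← lintegral_const_mul' _ _ ENNReal.ofReal_ne_top,
      ← lintegral_const_mul' _ _ ENNReal.ofReal_ne_top,
      ← lintegral_const_mul' _ _ ENNReal.ofReal_ne_top, ← lintegral_add_right' _ hm]
    refine lintegral_mono fun σ => ?_
    simp only [hg]
    rw [← ENNReal.ofReal_mul (by positivity), ← ENNReal.ofReal_mul (by positivity),
      ← ENNReal.ofReal_mul (by positivity), ← ENNReal.ofReal_add (by positivity) (by positivity)]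
    apply ENNReal.ofReal_le_ofReal
    refine (jump_pt _ _ _ (norm_nonneg _)).trans ?_
    gcongr
  have s3 := local_trace t h (hu t ht).1 (hu t ht).2.1 i hcD
  have s4 : ENNReal.ofReal (‖n‖ ^ 2) *
      ∫⁻ σ in Ioo (0:ℝ) 1, ENNReal.ofReal (u t (t.P i + σ • n) ^ 2) ≤
      ENNReal.ofReal (8 * K) * (ENNReal.ofReal (2 + D ^ 2) * AG (u t) t) := by
    refine (mul_le_mul_right s3 _).trans ?_
    rw [← mul_assoc, ← ENNReal.ofReal_mul (by positivity)]
    refine mul_le_mul' (ENNReal.ofReal_le_ofReal ?_) (fint_AG t (u t) hD0 le_rfl)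
    have := shape_edge t h (hK t ht) i
    rw [mul_div_assoc', div_le_iff₀ c0]
    nlinarith
  refine s1.trans ?_
  calc _ ≤ ENNReal.ofReal (|cr τ d|⁻¹ * D) * (ENNReal.ofReal ‖n‖ * ∫⁻ σ in Ioo (0:ℝ) 1, g σ) := by
        rw [← mul_assoc, ← ENNReal.ofReal_mul (by positivity)]
        refine mul_le_mul_left (ENNReal.ofReal_le_ofReal ?_) _
        rw [mul_assoc]
        have := cr_le n d
        refine mul_le_mul_of_nonneg_left ?_ (by positivity)
        calc _ ≤ _ := this
          _ ≤ ‖n‖ * D := by gcongr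
          _ = _ := mul_comm _ _
    _ ≤ _ := by
        gcongr
        exact s2.trans (add_le_add le_rfl s4)

/-- Boundary trace density. -/
def wb (Ω : Set Pt) (u : Tri → Pt → ℝ) (t : Tri) (i : Fin 3) (y : Pt) : ℝ≥0∞ :=
  if Triangulation.bd Ω t i ∧ t.OE i y then ENNReal.ofReal (u t y ^ 2) else 0

def Mc (K D κ : ℝ) : ℝ≥0∞ := 3 * (ENNReal.ofReal κ * ENNReal.ofReal (2 + D ^ 2) +
  ENNReal.ofReal (κ * D) * (ENNReal.ofReal (1 + D) +
    3 * (ENNReal.ofReal (8 * K) * ENNReal.ofReal (2 + D ^ 2))))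

theorem Mc_ne (K D κ : ℝ) : Mc K D κ ≠ ⊤ := by
  unfold Mc
  finiteness

theorem W_le {Ω : Set Pt} (T T₀ : Triangulation Ω) {u : Tri → Pt → ℝ} (hu : T.PwH1 u)
    {nb : Tri → Fin 3 → Tri} (hnb : IsNb T nb) {t₀ : Tri} (ht₀ : t₀ ∈ T₀.tris) {i₀ : Fin 3}
    (hb₀ : Triangulation.bd Ω t₀ i₀) (b : Bool) {r : ℝ} (h0 : 0 < r) (h1 : r < 1)
    (hgen : ∀ t ∈ T.tris, ∀ i, cr (t₀.cX i₀ b + r • t₀.cT i₀ b - t.P i) (t₀.cD i₀ b) ≠ 0) :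
    ∑ t ∈ T.tris, ∑ i, wb Ω u t i (t₀.cX i₀ b + r • t₀.cT i₀ b) ≤
      3 * (∑ t ∈ T.tris, (∫⁻ s in Ioo (0:ℝ) 1, t.openHull.indicator (Fint (u t) (t₀.cD i₀ b))
        (t₀.cX i₀ b + r • t₀.cT i₀ b + s • t₀.cD i₀ b)) +
      ∑ t ∈ T.tris, ∑ i, hJ Ω u nb t i (t₀.cD i₀ b) (t₀.cX i₀ b + r • t₀.cT i₀ b)) := by
  have hh₀ := T₀.nondeg t₀ ht₀
  have hoe := t₀.chart_OE hh₀ i₀ b h0 h1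
  have hsl := t₀.chart_slope hh₀ i₀ b
  have hin : ∀ s ∈ Ioo (0:ℝ) 1, t₀.cX i₀ b + r • t₀.cT i₀ b + s • t₀.cD i₀ b ∈ Ω :=
    fun s hs => T₀.open_subset ht₀ (t₀.chart_open hh₀ i₀ b h0 h1 hs.1 hs.2)
  set y := t₀.cX i₀ b + r • t₀.cT i₀ b with hy
  set d := t₀.cD i₀ b with hd
  have hyf : y ∈ frontier Ω := hb₀ (Triangulation.OE_seg hh₀ hoe)
  have hyn : y ∉ Ω := fun h => T.not_frontier h hyf
  have hdn : d ≠ 0 := by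
    intro h
    rw [h] at hsl
    simp [Tri.slope, cr] at hsl
  refine le_trans ?_ (mul_le_mul_right (line_lemma T u hu nb hnb hdn hgen hin hyn) 3)
  rw [Finset.sum_filter, Finset.mul_sum]
  refine Finset.sum_le_sum fun t ht => ?_
  calc _ ≤ ∑ i : Fin 3, (if (∀ᶠ s in nhdsWithin (0:ℝ) (Ioi 0), y + s • d ∈ t.openHull) then
          ENNReal.ofReal (u t y ^ 2) else 0) := by
        refine Finset.sum_le_sum fun i _ => ?_
        unfold wb
        by_cases hc : Triangulation.bd Ω t i ∧ t.OE i y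
        · have := T.direction T₀ ht ht₀ hc.1 hc.2 hoe (d := d) (by rw [hsl]; norm_num)
          rw [if_pos hc, if_pos (hc.2.move (T.nondeg t ht) this)]
        · rw [if_neg hc]; exact zero_le
    _ = _ := by simp

theorem chart_est {Ω : Set Pt} (T T₀ : Triangulation Ω) {K D : ℝ} (hK : T.ShapeRegular K)
    {u : Tri → Pt → ℝ} (hu : T.PwH1 u)
    {nb : Tri → Fin 3 → Tri} (hnb : IsNb T nb) {t₀ : Tri} (ht₀ : t₀ ∈ T₀.tris) {i₀ : Fin 3}
    (hb₀ : Triangulation.bd Ω t₀ i₀) (b : Bool) (hd : ‖t₀.cD i₀ b‖ ≤ D)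
    (hl : ∀ t ∈ T.tris, ∀ i, ‖t.Q i - t.P i‖ ≤ D) (hcD : ∀ t ∈ T.tris, ∀ i b, ‖t.cD i b‖ ≤ D) :
    ∫⁻ r in Ioo (0:ℝ) 1, ∑ t ∈ T.tris, ∑ i, wb Ω u t i (t₀.cX i₀ b + r • t₀.cT i₀ b) ≤
      Mc K D (|cr (t₀.cT i₀ b) (t₀.cD i₀ b)|⁻¹) * ∑ t ∈ T.tris, En Ω u nb t := by
  have hh₀ := T₀.nondeg t₀ ht₀
  have hcr : cr (t₀.cT i₀ b) (t₀.cD i₀ b) ≠ 0 := by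
    have := t₀.chart_cr i₀ b
    have h' : 0 < |t₀.cross| := abs_pos.2 hh₀
    exact abs_pos.1 (by rw [this]; positivity)
  have hD0 : 0 ≤ D := (norm_nonneg _).trans hd
  have hW := fun r h0 h1 => W_le T T₀ hu hnb ht₀ hb₀ b (r := r) h0 h1
  set x := t₀.cX i₀ b
  set τ := t₀.cT i₀ b
  set d := t₀.cD i₀ b
  have hgen : ∀ᵐ r : ℝ, ∀ t ∈ T.tris, ∀ i, cr (x + r • τ - t.P i) d ≠ 0 := by
    have hfin : (⋃ t ∈ T.tris, ⋃ i : Fin 3, {- cr (x - t.P i) d / cr τ d}).Finite :=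
      T.tris.finite_toSet.biUnion fun t _ => finite_iUnion fun i => finite_singleton _
    filter_upwards [hfin.countable.ae_notMem volume] with r hr t ht i h0
    apply hr
    simp only [mem_iUnion, mem_singleton_iff]
    refine ⟨t, ht, i, ?_⟩
    rw [eq_div_iff hcr]
    have : cr (x + r • τ - t.P i) d = r * cr τ d + cr (x - t.P i) d := by simp [cr]; ring
    linarith
  have m1 : ∀ t ∈ T.tris, Measurable fun r : ℝ => ∫⁻ s in Ioo (0:ℝ) 1,
      t.openHull.indicator (Fint (u t) d) (x + r • τ + s • d) := by
    intro t ht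
    apply Measurable.lintegral_prod_right' (f := fun p : ℝ × ℝ =>
      t.openHull.indicator (Fint (u t) d) (x + p.1 • τ + p.2 • d))
    exact (meas_ind t (hu t ht).1 d).comp (by fun_prop)
  have m2 : ∀ t ∈ T.tris, ∀ i, Measurable fun r : ℝ => hJ Ω u nb t i d (x + r • τ) :=
    fun t ht i => hJ_meas T hu hnb ht i x τ d
  calc _ ≤ ∫⁻ r in Ioo (0:ℝ) 1, 3 * (∑ t ∈ T.tris, (∫⁻ s in Ioo (0:ℝ) 1,
          t.openHull.indicator (Fint (u t) d) (x + r • τ + s • d)) +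
          ∑ t ∈ T.tris, ∑ i, hJ Ω u nb t i d (x + r • τ)) := by
        refine lintegral_mono_ae ?_
        filter_upwards [ae_restrict_of_ae hgen, ae_restrict_mem measurableSet_Ioo] with r hr hI
        exact hW r hI.1 hI.2 hr
    _ = 3 * (∑ t ∈ T.tris, (∫⁻ r in Ioo (0:ℝ) 1, ∫⁻ s in Ioo (0:ℝ) 1,
          t.openHull.indicator (Fint (u t) d) (x + r • τ + s • d)) +
          ∑ t ∈ T.tris, ∑ i, ∫⁻ r in Ioo (0:ℝ) 1, hJ Ω u nb t i d (x + r • τ)) := by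
        rw [lintegral_const_mul' _ _ (by simp),
          lintegral_add_left (Finset.measurable_sum _ m1), lintegral_finsetSum _ m1,
          lintegral_finsetSum _ fun t ht => Finset.measurable_sum _ fun i _ => m2 t ht i]
        congr 2
        exact Finset.sum_congr rfl fun t ht => lintegral_finsetSum _ fun i _ => m2 t ht i
    _ ≤ _ := by
        unfold Mc
        rw [mul_assoc, Finset.mul_sum, ← Finset.sum_add_distrib]
        refine mul_le_mul_right (Finset.sum_le_sum fun t ht => ?_) _
        have e1 := (lint_paral t (hu t ht).1 x τ d hcr).trans
          (mul_le_mul_right (fint_AG t (u t) (norm_nonneg d) hd) _)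
        have e2 : ∑ i, ∫⁻ r in Ioo (0:ℝ) 1, hJ Ω u nb t i d (x + r • τ) ≤ _ :=
          Finset.sum_le_sum fun i _ => hJ_int T hK hu hnb ht i x τ hcr hd (hl t ht i)
            (hcD t ht i)
        refine (add_le_add e1 e2).trans ?_
        rw [← Finset.mul_sum, Finset.sum_add_distrib, ← Finset.mul_sum, add_mul]
        unfold En
        set a := AG (u t) t
        set j := ∑ i, Jn Ω u nb t i
        have ha : a ≤ a + j := le_self_add
        have hj : j ≤ a + j := le_add_self
        refine add_le_add ?_ ?_
        · rw [mul_assoc]; gcongr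
        · rw [mul_assoc, add_mul]
          refine mul_le_mul_right (add_le_add (mul_le_mul_right hj _) ?_) _
          simp only [Finset.sum_const, Finset.card_univ, Fintype.card_fin, nsmul_eq_mul,
            Nat.cast_ofNat, mul_assoc]
          gcongr
/-! ### Global assembly -/

theorem int_seg {f : ℝ → ℝ} (hf : ContinuousOn f (Icc 0 1)) (h0 : ∀ s, 0 ≤ f s) :
    ENNReal.ofReal (∫ s in (0:ℝ)..1, f s) = ∫⁻ s in Ioo (0:ℝ) 1, ENNReal.ofReal (f s) := by
  have hi : IntegrableOn f (Ioo 0 1) :=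
    (hf.integrableOn_compact isCompact_Icc).mono_set Ioo_subset_Icc_self
  rw [intervalIntegral.integral_of_le zero_le_one, integral_Ioc_eq_integral_Ioo,
    ofReal_integral_eq_lintegral_ofReal hi (ae_of_all _ h0)]

theorem int_seg_nonneg {f : ℝ → ℝ} (h0 : ∀ s, 0 ≤ f s) : 0 ≤ ∫ s in (0:ℝ)..1, f s :=
  intervalIntegral.integral_nonneg zero_le_one fun s _ => h0 s

theorem AG_eq {Ω : Set Pt} (T : Triangulation Ω) {u : Tri → Pt → ℝ} (hu : T.PwH1 u)
    {t : Tri} (ht : t ∈ T.tris) : AG (u t) t = ENNReal.ofReal ((∫ x in t.openHull, (u t x) ^ 2) +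
      ∫ x in t.openHull, ‖fderiv ℝ (u t) x‖ ^ 2) := by
  obtain ⟨-, -, h1, h2⟩ := hu t ht
  rw [ENNReal.ofReal_add (integral_nonneg fun _ => by positivity)
    (integral_nonneg fun _ => by positivity),
    ofReal_integral_eq_lintegral_ofReal h1 (ae_of_all _ fun _ => by positivity),
    ofReal_integral_eq_lintegral_ofReal h2 (ae_of_all _ fun _ => by positivity), AG]

/-- The real-valued jump integral. -/
def Jr (u : Tri → Pt → ℝ) (t t' : Tri) (i : Fin 3) : ℝ :=
  ∫ σ in (0:ℝ)..1, (u t (t.P i + σ • (t.Q i - t.P i)) - u t' (t.P i + σ • (t.Q i - t.P i))) ^ 2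

theorem Jr_nonneg (u : Tri → Pt → ℝ) (t t' : Tri) (i : Fin 3) : 0 ≤ Jr u t t' i :=
  int_seg_nonneg fun _ => by positivity

theorem edgeJump_eq (u : Tri → Pt → ℝ) (t t' : Tri) (h : t.Nondeg) :
    Triangulation.edgeJump u t t' = ∑ i, if ∃ i', SameEdge (t.P i, t.Q i) (t'.P i', t'.Q i') then
      Jr u t t' i else 0 := by
  unfold Triangulation.edgeJump
  rw [Tri.edge_sum]
  refine Finset.sum_congr rfl fun i _ => ?_
  have hiff : (∃ e' ∈ t'.edgeList, SameEdge (t.P i, t.Q i) e') ↔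
      ∃ i', SameEdge (t.P i, t.Q i) (t'.P i', t'.Q i') := by
    constructor
    · rintro ⟨e', he', hs⟩
      obtain ⟨i', rfl⟩ := (t'.mem_edgeList _).1 he'
      exact ⟨i', hs⟩
    · rintro ⟨i', hs⟩
      exact ⟨_, (t'.mem_edgeList _).2 ⟨i', rfl⟩, hs⟩
  have hd : dist (t.P i) (t.Q i) ≠ 0 := dist_ne_zero.2 (t.cross_ne h i).symm
  by_cases hc : ∃ i', SameEdge (t.P i, t.Q i) (t'.P i', t'.Q i')
  · rw [if_pos (hiff.2 hc), if_pos hc, segInt, inv_mul_cancel_left₀ hd, Jr]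
  · rw [if_neg (fun h => hc (hiff.1 h)), if_neg hc]

theorem Jn_le {Ω : Set Pt} (T : Triangulation Ω) {u : Tri → Pt → ℝ} (hu : T.PwH1 u)
    {nb : Tri → Fin 3 → Tri} (hnb : IsNb T nb) {t : Tri} (ht : t ∈ T.tris) :
    ∑ i, Jn Ω u nb t i ≤ ENNReal.ofReal (∑ t₂ ∈ T.tris,
      if t ≠ t₂ then Triangulation.edgeJump u t t₂ else 0) := by
  set F : Fin 3 → Tri → ℝ := fun i t₂ => if t ≠ t₂ then
    (if ∃ i', SameEdge (t.P i, t.Q i) (t₂.P i', t₂.Q i') then Jr u t t₂ i else 0) else 0 with hF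
  have hF0 : ∀ i t₂, 0 ≤ F i t₂ := by
    intro i t₂
    simp only [hF]
    split_ifs
    exacts [Jr_nonneg _ _ _ _, le_rfl, le_rfl]
  have e : (∑ t₂ ∈ T.tris, if t ≠ t₂ then Triangulation.edgeJump u t t₂ else 0) =
      ∑ i, ∑ t₂ ∈ T.tris, F i t₂ := by
    rw [Finset.sum_comm]
    refine Finset.sum_congr rfl fun t₂ _ => ?_
    simp only [hF]
    by_cases hne : t ≠ t₂
    · simp only [if_pos hne]
      exact edgeJump_eq u t t₂ (T.nondeg t ht)
    · simp only [if_neg hne, Finset.sum_const_zero]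
  rw [e, ENNReal.ofReal_sum_of_nonneg fun i _ => Finset.sum_nonneg fun t₂ _ => hF0 i t₂]
  refine Finset.sum_le_sum fun i _ => ?_
  unfold Jn
  by_cases hb : Triangulation.bd Ω t i
  · rw [if_pos hb]; exact zero_le
  rw [if_neg hb]
  obtain ⟨h1, h2, i', hs⟩ := hnb t ht i hb
  have h3 := Finset.single_le_sum (f := F i) (fun t₂ _ => hF0 i t₂) h1
  refine le_trans (le_of_eq ?_) (ENNReal.ofReal_le_ofReal h3)
  simp only [hF]
  rw [if_pos h2.symm, if_pos ⟨i', hs⟩, Jr, int_seg]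
  · exact ((cont_edge T hu ht i).sub (cont_edge_nb T hu h1 hs)).pow 2
  · intro; positivity

theorem En_le {Ω : Set Pt} (T : Triangulation Ω) {u : Tri → Pt → ℝ} (hu : T.PwH1 u)
    {nb : Tri → Fin 3 → Tri} (hnb : IsNb T nb) :
    (∑ t ∈ T.tris, En Ω u nb t ≤ ENNReal.ofReal (2 * T.normSq u)) ∧ 0 ≤ T.normSq u := by
  have j0 : ∀ t ∈ T.tris, 0 ≤ ∑ t₂ ∈ T.tris,
      if t ≠ t₂ then Triangulation.edgeJump u t t₂ else 0 := by
    intro t ht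
    refine Finset.sum_nonneg fun t₂ _ => ?_
    split_ifs
    · rw [edgeJump_eq u t t₂ (T.nondeg t ht)]
      refine Finset.sum_nonneg fun i _ => ?_
      split_ifs
      exacts [Jr_nonneg _ _ _ _, le_rfl]
    · exact le_rfl
  have a0 : ∀ t, 0 ≤ ∫ x in t.openHull, (u t x) ^ 2 := fun t =>
    integral_nonneg fun _ => by positivity
  have g0 : ∀ t, 0 ≤ ∫ x in t.openHull, ‖fderiv ℝ (u t) x‖ ^ 2 := fun t =>
    integral_nonneg fun _ => by positivity
  have A0 : 0 ≤ T.sqL2 u := Finset.sum_nonneg fun t _ => a0 t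
  have G0 : 0 ≤ T.gradSq u := Finset.sum_nonneg fun t _ => g0 t
  have J0 : 0 ≤ T.jumpSq u := by
    unfold Triangulation.jumpSq
    have := Finset.sum_nonneg j0
    positivity
  refine ⟨?_, by unfold Triangulation.normSq; positivity⟩
  have e : ∀ t ∈ T.tris, En Ω u nb t ≤ ENNReal.ofReal (((∫ x in t.openHull, (u t x) ^ 2) +
      ∫ x in t.openHull, ‖fderiv ℝ (u t) x‖ ^ 2) + ∑ t₂ ∈ T.tris,
      if t ≠ t₂ then Triangulation.edgeJump u t t₂ else 0) := by
    intro t ht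
    unfold En
    rw [ENNReal.ofReal_add (add_nonneg (a0 t) (g0 t)) (j0 t ht), AG_eq T hu ht]
    exact add_le_add le_rfl (Jn_le T hu hnb ht)
  refine (Finset.sum_le_sum e).trans ?_
  rw [← ENNReal.ofReal_sum_of_nonneg fun t ht => add_nonneg (add_nonneg (a0 t) (g0 t)) (j0 t ht)]
  apply ENNReal.ofReal_le_ofReal
  rw [Finset.sum_add_distrib, Finset.sum_add_distrib]
  have e1 : ∑ t ∈ T.tris, ∫ x in t.openHull, (u t x) ^ 2 = T.sqL2 u := rfl
  have e2 : ∑ t ∈ T.tris, ∫ x in t.openHull, ‖fderiv ℝ (u t) x‖ ^ 2 = T.gradSq u := rfl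
  have e3 : (∑ t ∈ T.tris, ∑ t₂ ∈ T.tris,
      if t ≠ t₂ then Triangulation.edgeJump u t t₂ else 0) = 2 * T.jumpSq u := by
    unfold Triangulation.jumpSq
    ring
  rw [e1, e2, e3]
  unfold Triangulation.normSq
  linarith

theorem bdry_le {Ω : Set Pt} (T : Triangulation Ω) {u : Tri → Pt → ℝ} (hu : T.PwH1 u) :
    ENNReal.ofReal (T.bdrySq u) ≤
      ∫⁻ y, ∑ t ∈ T.tris, ∑ i, wb Ω u t i y ∂(μH[1] : Measure Pt) := by
  refine le_trans ?_ (sum_lint_le _ _ _)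
  have hn : ∀ t i, 0 ≤ (if segment ℝ (t.P i) (t.Q i) ⊆ frontier Ω then
      segInt (t.P i) (t.Q i) (fun x => (u t x) ^ 2) else 0) := by
    intro t i
    split_ifs
    · exact mul_nonneg dist_nonneg (int_seg_nonneg fun _ => by positivity)
    · exact le_rfl
  unfold Triangulation.bdrySq
  simp only [Tri.edge_sum]
  rw [ENNReal.ofReal_sum_of_nonneg fun t _ => Finset.sum_nonneg fun i _ => hn t i]
  refine Finset.sum_le_sum fun t ht => ?_
  rw [ENNReal.ofReal_sum_of_nonneg fun i _ => hn t i]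
  refine le_trans (Finset.sum_le_sum fun i _ => ?_) (sum_lint_le _ _ _)
  split_ifs with hb
  · have hv : t.Q i - t.P i ≠ 0 := sub_ne_zero.2 (t.cross_ne (T.nondeg t ht) i)
    refine le_trans (le_of_eq ?_) (setLIntegral_le_lintegral (oseg (t.P i) (t.Q i - t.P i)) _)
    rw [← lint_oseg _ _ hv, segInt, ENNReal.ofReal_mul dist_nonneg, int_seg, dist_comm,
      dist_eq_norm]
    · congr 1
      refine setLIntegral_congr_fun measurableSet_Ioo fun σ hσ => ?_
      simp only [wb]
      rw [if_pos ⟨hb, t.openSeg_OE (T.nondeg t ht) i hσ.1 hσ.2⟩]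
    · exact (cont_edge T hu ht i).pow 2
    · intro; positivity
  · simp

theorem cover_le {Ω : Set Pt} (T T₀ : Triangulation Ω) (u : Tri → Pt → ℝ) :
    ∫⁻ y, ∑ t ∈ T.tris, ∑ i, wb Ω u t i y ∂(μH[1] : Measure Pt) ≤
      ∑ c : {t // t ∈ T₀.tris} × Fin 3 × Bool,
        if Triangulation.bd Ω c.1.1 c.2.1 then
          ENNReal.ofReal ‖c.1.1.cT c.2.1 c.2.2‖ * ∫⁻ r in Ioo (0:ℝ) 1, ∑ t ∈ T.tris, ∑ i,
            wb Ω u t i (c.1.1.cX c.2.1 c.2.2 + r • c.1.1.cT c.2.1 c.2.2)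
        else 0 := by
  set W : Pt → ℝ≥0∞ := fun y => ∑ t ∈ T.tris, ∑ i, wb Ω u t i y with hW
  set S : {t // t ∈ T₀.tris} × Fin 3 × Bool → Set Pt := fun c =>
    if Triangulation.bd Ω c.1.1 c.2.1 then oseg (c.1.1.cX c.2.1 c.2.2) (c.1.1.cT c.2.1 c.2.2)
      else ∅ with hS
  have hW0 : ∀ y, y ∉ frontier Ω → W y = 0 := by
    intro y hy
    refine Finset.sum_eq_zero fun t ht => Finset.sum_eq_zero fun i _ => ?_
    rw [wb, if_neg]
    rintro ⟨hb, ho⟩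
    exact hy (hb (Triangulation.OE_seg (T.nondeg t ht) ho))
  have hae : ∀ᵐ y ∂(μH[1] : Measure Pt), W y ≤ (⋃ c, S c).indicator W y := by
    have hfin : (⋃ t ∈ T₀.tris, ⋃ i : Fin 3,
        {t.P i, t.P i + (1/2 : ℝ) • (t.Q i - t.P i)}).Finite :=
      T₀.tris.finite_toSet.biUnion fun t _ => finite_iUnion fun i => toFinite _
    have : NullSingletonClass (μH[1] : Measure Pt) :=
      Measure.nullSingletonClass_hausdorff Pt one_pos
    filter_upwards [hfin.countable.ae_notMem (μH[1] : Measure Pt)] with y hy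
    simp only [mem_iUnion, mem_insert_iff, mem_singleton_iff, not_exists, not_or] at hy
    by_cases hf : y ∈ frontier Ω
    · obtain ⟨t, ht, i, hb, b, r, h0, h1, e⟩ := T₀.exists_chart hf
        (fun t ht i => (hy t ht i).1) (fun t ht i => (hy t ht i).2)
      have : y ∈ ⋃ c, S c := by
        refine mem_iUnion.2 ⟨(⟨t, ht⟩, i, b), ?_⟩
        simp only [hS, if_pos hb]
        exact ⟨r, ⟨h0, h1⟩, e.symm⟩
      rw [indicator_of_mem this]
    · rw [hW0 y hf]; exact zero_le
  refine (lintegral_mono_ae hae).trans ((lintegral_indicator_le _ _).trans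
    ((lintegral_iUnion_le _ _).trans (le_of_eq ?_)))
  rw [tsum_fintype]
  refine Finset.sum_congr rfl fun c _ => ?_
  simp only [hS]
  by_cases hb : Triangulation.bd Ω c.1.1 c.2.1
  · rw [if_pos hb, if_pos hb, ← lint_oseg _ _ ?_ W]
    intro h0
    have h1 := c.1.1.chart_cr c.2.1 c.2.2
    rw [h0] at h1
    have h' : 0 < |c.1.1.cross| := abs_pos.2 (T₀.nondeg _ c.1.2)
    simp [cr] at h1
    linarith
  · rw [if_neg hb, if_neg hb]; simp

theorem diam_bounds {Ω : Set Pt} (hb : Bornology.IsBounded Ω) (T : Triangulation Ω) {t : Tri}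
    (ht : t ∈ T.tris) (i : Fin 3) : ‖t.Q i - t.P i‖ ≤ Metric.diam (closure Ω) ∧
      ∀ b, ‖t.cD i b‖ ≤ Metric.diam (closure Ω) := by
  have hc := hb.closure
  have hs := T.closed_subset ht
  have key : ∀ p ∈ t.closedHull, ∀ q ∈ t.closedHull, ‖p - q‖ ≤ Metric.diam (closure Ω) := by
    intro p hp q hq
    rw [← dist_eq_norm]
    exact Metric.dist_le_diam_of_mem hc (hs hp) (hs hq)
  refine ⟨key _ (t.Q_mem i) _ (t.P_mem i), fun b => ?_⟩
  have hx : t.cX i b ∈ t.closedHull := by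
    unfold Tri.cX
    split_ifs
    exacts [t.Q_mem i, t.P_mem i]
  have := key _ (t.R_mem i) _ hx
  rw [Tri.cD, norm_smul, show ‖(1/2 : ℝ)‖ = 1/2 by norm_num]
  linarith [norm_nonneg (t.R i - t.cX i b)]

/-- Trace theorem for piecewise `H¹` functions (squared form):
`‖u‖²_{L²(∂Ω)} ≤ C ‖u‖²_{H¹_h}` with `C` depending only on `Ω` and `𝒦`. -/
theorem trace_theorem_piecewise_H1 (Ω : Set Pt) (hΩ : IsPolygon Ω) (K : ℝ) :
    ∃ C : ℝ, 0 < C ∧ ∀ T : Triangulation Ω, T.ShapeRegular K →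
      ∀ u : Tri → Pt → ℝ, T.PwH1 u → T.bdrySq u ≤ C * T.normSq u := by
  by_cases hne : Nonempty (Triangulation Ω)
  swap
  · exact ⟨1, one_pos, fun T => absurd ⟨T⟩ hne⟩
  obtain ⟨T₀⟩ := hne
  have hbdd : Bornology.IsBounded Ω := hΩ.2.1
  set D := Metric.diam (closure Ω) with hD
  set M : ENNReal := ∑ c : {t // t ∈ T₀.tris} × Fin 3 × Bool,
    ENNReal.ofReal ‖c.1.1.cT c.2.1 c.2.2‖ *
      Mc K D (|cr (c.1.1.cT c.2.1 c.2.2) (c.1.1.cD c.2.1 c.2.2)|⁻¹) with hM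
  have hMf : M ≠ ⊤ := ENNReal.sum_ne_top.2 fun c _ =>
    ENNReal.mul_ne_top ENNReal.ofReal_ne_top (Mc_ne _ _ _)
  refine ⟨2 * M.toReal + 1, by positivity, fun T hK u hu => ?_⟩
  set nb : Tri → Fin 3 → Tri := fun t i =>
    if h : t ∈ T.tris ∧ ¬ Triangulation.bd Ω t i then (T.exists_nb h.1 h.2).choose else t with hnbd
  have hnb : IsNb T nb := by
    intro t ht i hb
    simp only [hnbd, dif_pos (show t ∈ T.tris ∧ ¬ Triangulation.bd Ω t i from ⟨ht, hb⟩)]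
    exact (T.exists_nb ht hb).choose_spec
  obtain ⟨hE, hN⟩ := En_le T hu hnb
  have main : ENNReal.ofReal (T.bdrySq u) ≤ M * ENNReal.ofReal (2 * T.normSq u) := by
    refine (bdry_le T hu).trans ((cover_le T T₀ u).trans (le_trans ?_ (mul_le_mul_right hE M)))
    rw [hM, Finset.sum_mul]
    refine Finset.sum_le_sum fun c _ => ?_
    split_ifs with hb
    · rw [mul_assoc]
      refine mul_le_mul_right ?_ _
      exact chart_est T T₀ hK hu hnb c.1.2 hb c.2.2 ((diam_bounds hbdd T₀ c.1.2 c.2.1).2 _)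
        (fun t ht i => (diam_bounds hbdd T ht i).1) (fun t ht i => (diam_bounds hbdd T ht i).2)
    · exact zero_le
  have h2 : M * ENNReal.ofReal (2 * T.normSq u) =
      ENNReal.ofReal (M.toReal * (2 * T.normSq u)) := by
    rw [ENNReal.ofReal_mul ENNReal.toReal_nonneg, ENNReal.ofReal_toReal hMf]
  rw [h2, ENNReal.ofReal_le_ofReal_iff (by positivity)] at main
  linarith
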